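/- arXiv:2409.01634 — 4 statements merged into one kernel-verified Lean document; each statement's English description precedes it below -/
import Mathlib

section
/- Let G be a finite group, N a normal subgroup with G/N a p-group, and H ≤ G with G = NH. Set M = N ∩ H. Let θ be a G-invariant irreducible character of N and φ an H-invariant irreducible character of M such that p does not divide the multiplicity [θ|_M, φ]. If θ extends to an irreducible character of G, then φ extends to an irreducible character of H. -/
open scoped BigOperators Classical

noncomputable section

/-- `χ` is the character of some irreducible complex representation of `G`. -/
def IsIrrChar {G : Type} [Group G] (χ : G → ℂ) : Prop :=
  ∃ V : FDRep ℂ G, CategoryTheory.Simple V ∧ FDRep.character V = χ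

/-- The degree of a character, as a natural number. -/
def charDeg {G : Type} [Group G] (χ : G → ℂ) : ℕ := ⌊(χ 1).re⌋₊

/-- `p`-part of a natural number: the largest power of `p` dividing `n`. -/
def pPart (p n : ℕ) : ℕ := p ^ (n.factorization p)

/-- Inner product of class functions on a finite group. -/
def charInner (G : Type) [Group G] [Fintype G] (α β : G → ℂ) : ℂ :=
  (Nat.card G : ℂ)⁻¹ * ∑ g : G, α g * (starRingEnd ℂ) (β g)

/-- Restriction of a class function to a subgroup. -/
def charRes {G : Type} [Group G] (H : Subgroup G) (χ : G → ℂ) : H → ℂ := fun h => χ (h : G)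

/-- Induced class function. -/
def charInd {G : Type} [Group G] [Fintype G] (U : Subgroup G) (τ : U → ℂ) : G → ℂ :=
  fun g => (Nat.card U : ℂ)⁻¹ * ∑ x : G, if h : x * g * x⁻¹ ∈ U then τ ⟨x * g * x⁻¹, h⟩ else 0

open scoped ComplexOrder in
lemma conj_trace_rep {G : Type} [Group G] [Fintype G] {W : Type} [AddCommGroup W] [Module ℂ W]
    [FiniteDimensional ℂ W] (ρ : G →* (W →ₗ[ℂ] W)) (g : G) :
    (starRingEnd ℂ) (LinearMap.trace ℂ W (ρ g)) = LinearMap.trace ℂ W (ρ g⁻¹) := by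
  let b := Module.finBasis ℂ W
  let A : G → Matrix (Fin (Module.finrank ℂ W)) (Fin (Module.finrank ℂ W)) ℂ :=
    fun g => LinearMap.toMatrix b b (ρ g)
  have hmul : ∀ x y, A (x * y) = A x * A y := fun x y => by
    simp only [A, map_mul, LinearMap.toMatrix_mul]
  have h1 : A 1 = 1 := by simp only [A, map_one, LinearMap.toMatrix_one]
  have htr : ∀ x, LinearMap.trace ℂ W (ρ x) = (A x).trace := fun x =>
    LinearMap.trace_eq_matrix_trace ℂ b (ρ x)
  let S := ∑ x, (A x).conjTranspose * A x
  have hS : S.PosDef := by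
    have e : S = (A 1).conjTranspose * A 1 + ∑ x ∈ Finset.univ.erase 1, (A x).conjTranspose * A x :=
      (Finset.add_sum_erase _ _ (Finset.mem_univ 1)).symm
    rw [e, h1]
    refine Matrix.PosDef.add_posSemidef ?_ ?_
    · simpa using Matrix.PosDef.one
    · exact Matrix.posSemidef_sum _ fun x _ => Matrix.posSemidef_conjTranspose_mul_self _
  have hSg : (A g).conjTranspose * S * A g = S := by
    simp only [S, Finset.mul_sum, Finset.sum_mul]
    refine Fintype.sum_equiv (Equiv.mulRight g) _ _ fun x => ?_
    simp [hmul, Matrix.conjTranspose_mul, Matrix.mul_assoc]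
  have hu : IsUnit S.det := (Matrix.isUnit_iff_isUnit_det S).1 hS.isUnit
  have hgg : A g * A g⁻¹ = 1 := by rw [← hmul, mul_inv_cancel, h1]
  have key : (A g).conjTranspose = S * A g⁻¹ * S⁻¹ := by
    rw [← Matrix.mul_nonsing_inv_cancel_right S (A g).conjTranspose hu]
    congr 1
    calc (A g).conjTranspose * S = (A g).conjTranspose * S * (A g * A g⁻¹) := by
          rw [hgg, Matrix.mul_one]
      _ = _ := by rw [← Matrix.mul_assoc, hSg]
  rw [htr, htr, starRingEnd_apply, ← Matrix.trace_conjTranspose, key, Matrix.trace_mul_comm,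
    ← Matrix.mul_assoc, Matrix.nonsing_inv_mul _ hu, Matrix.one_mul]

lemma transfer_of_invariant {G A : Type} [Group G] [CommGroup A] (B : Subgroup G) [hB : B.Normal]
    [B.FiniteIndex] (ϕ : B →* A) (inv : ∀ (g : G) (b : B), ϕ (MulAut.conjNormal g b) = ϕ b)
    (b : B) : MonoidHom.transfer ϕ (b : G) = ϕ b ^ B.index := by
  let _ := B.fintypeQuotientOfFiniteIndex
  rw [MonoidHom.transfer_def ϕ (default : B.LeftTransversal), Subgroup.leftTransversals.diff]
  refine (Finset.prod_congr rfl (g := fun _ => ϕ b) fun q _ => ?_).trans ?_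
  · rw [← inv ((((default : B.LeftTransversal)).2.leftQuotientEquiv q : G))⁻¹ b]
    congr 1
    ext
    simp only [MulAut.conjNormal_apply]
    rw [Subgroup.smul_apply_eq_smul_apply_inv_smul]
    have e : (b : G)⁻¹ • q = q := by
      induction q using QuotientGroup.induction_on with
      | H z =>
        rw [MulAction.Quotient.smul_coe]
        apply QuotientGroup.eq.2
        have := hB.conj_mem b b.2 z⁻¹
        simpa [mul_assoc] using this
    rw [e]
    simp [mul_assoc]
  · simp [Subgroup.index_eq_card]

/-- The group of pairs `(h, P)` where `P` intertwines `ρ` and its `h`-conjugate. -/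
def extGrp {H : Type} [Group H] (M : Subgroup H) [M.Normal]
    {W : Type} [AddCommGroup W] [Module ℂ W] (ρ : M →* Module.End ℂ W) :
    Subgroup (H × (Module.End ℂ W)ˣ) where
  carrier := {x | ∀ m : M, (x.2 : Module.End ℂ W) * ρ m = ρ (MulAut.conjNormal x.1 m) * x.2}
  one_mem' := by intro m; simp
  mul_mem' := by
    intro x y hx hy m
    simp only [Prod.snd_mul, Units.val_mul, Prod.fst_mul, map_mul, MulAut.mul_apply]
    rw [mul_assoc, hy, ← mul_assoc, hx, mul_assoc]
  inv_mem' := by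
    intro x hx m
    have := hx (MulAut.conjNormal x.1⁻¹ m)
    simp only [map_inv, MulAut.apply_inv_self] at this
    simp only [Prod.snd_inv, Prod.fst_inv, map_inv]
    rw [Units.inv_mul_eq_iff_eq_mul, ← mul_assoc, this, mul_assoc, Units.mul_inv, mul_one]

/-- Intertwiners -/
def homSub {H : Type} [Group H] (M : Subgroup H)
    {W V : Type} [AddCommGroup W] [Module ℂ W] [AddCommGroup V] [Module ℂ V]
    (ρ : M →* Module.End ℂ W) (σ : H →* Module.End ℂ V) : Submodule ℂ (W →ₗ[ℂ] V) where
  carrier := {f | ∀ m : M, f ∘ₗ ρ m = σ m ∘ₗ f}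
  zero_mem' := by intro m; simp
  add_mem' := by
    intro a b ha hb m
    rw [LinearMap.add_comp, LinearMap.comp_add, ha, hb]
  smul_mem' := by
    intro c a ha m
    rw [LinearMap.smul_comp, LinearMap.comp_smul, ha]

/-- The action on intertwiners -/
def actHom {H : Type} [Group H] (M : Subgroup H) [M.Normal]
    {W V : Type} [AddCommGroup W] [Module ℂ W] [AddCommGroup V] [Module ℂ V]
    (ρ : M →* Module.End ℂ W) (σ : H →* Module.End ℂ V) :
    extGrp M ρ →* Module.End ℂ (homSub M ρ σ) where
  toFun e :=
    { toFun := fun f => ⟨σ e.1.1 ∘ₗ f.1 ∘ₗ (e⁻¹).1.2.1, by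
        intro m
        have h1 := (e⁻¹).2 m
        have h2 := f.2 (MulAut.conjNormal (e⁻¹).1.1 m)
        have h3 : σ e.1.1 * σ (MulAut.conjNormal (e⁻¹).1.1 m : M) = σ m * σ e.1.1 := by
          rw [← map_mul, ← map_mul]
          congr 1
          simp [mul_assoc]
        ext w
        have h1' := LinearMap.congr_fun h1 w
        have h2' := LinearMap.congr_fun h2 ((e⁻¹).1.2.1 w)
        have h3' := LinearMap.congr_fun h3 (f.1 ((e⁻¹).1.2.1 w))
        simp only [Module.End.mul_apply, LinearMap.comp_apply] at h1' h2' h3' ⊢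
        rw [h1', h2', h3']⟩
      map_add' := by
        intro f g
        ext w
        simp
      map_smul' := by
        intro c f
        ext w
        simp }
  map_one' := by ext f w; simp
  map_mul' := by
    intro x y
    ext f w
    simp [Module.End.mul_apply]

lemma core_ext {H : Type} [Group H] [Finite H] (M : Subgroup H) [M.Normal]
    {W V : Type} [AddCommGroup W] [Module ℂ W] [FiniteDimensional ℂ W] [Nontrivial W]
    [AddCommGroup V] [Module ℂ V] [FiniteDimensional ℂ V]
    (ρ : M →* Module.End ℂ W) (σ : H →* Module.End ℂ V)
    (schur : ∀ f : Module.End ℂ W, (∀ m, f * ρ m = ρ m * f) → ∃ c : ℂ, f = c • 1)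
    (hP : ∀ h : H, ∃ P : (Module.End ℂ W)ˣ, ∀ m,
      (P : Module.End ℂ W) * ρ m = ρ (MulAut.conjNormal h m) * P)
    (hk : Nat.Coprime (Module.finrank ℂ (homSub M ρ σ)) M.index) :
    ∃ τ : H →* Module.End ℂ W, ∀ m : M, τ m = ρ m := by
  let E := extGrp M ρ
  let π : E →* H := (MonoidHom.fst _ _).comp E.subtype
  let π2 : E →* (Module.End ℂ W)ˣ := (MonoidHom.snd _ _).comp E.subtype
  have hπ : Function.Surjective π := fun h => by
    obtain ⟨P, hP⟩ := hP h
    exact ⟨⟨(h, P), hP⟩, rfl⟩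
  let s : ℂˣ →* (Module.End ℂ W)ˣ := Units.map (algebraMap ℂ (Module.End ℂ W)).toMonoidHom
  have hs : Function.Injective s := Units.map_injective (algebraMap ℂ (Module.End ℂ W)).injective
  have hsc : ∀ (c : ℂˣ) (P : (Module.End ℂ W)ˣ), s c * P = P * s c := fun c P => by
    ext1
    exact Algebra.commutes _ _
  let r : M →* (Module.End ℂ W)ˣ := ρ.toHomUnits
  have hr : ∀ m, (r m : Module.End ℂ W) = ρ m := fun m => rfl
  -- elements of E
  have hE : ∀ (e : E) (m : M), π2 e * r m = r (MulAut.conjNormal (π e) m) * π2 e := fun e m => by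
    ext1
    exact e.2 m
  let B : Subgroup E := M.comap π
  have hB : B.index = M.index := Subgroup.index_comap_of_surjective _ hπ
  have : B.FiniteIndex := ⟨by rw [hB]; exact Subgroup.FiniteIndex.index_ne_zero⟩
  have hBs : ∀ b : B, ∃ c : ℂˣ, π2 b = s c * r ⟨π b, b.2⟩ := fun b => by
    let Q : (Module.End ℂ W)ˣ := π2 b * (r ⟨π b, b.2⟩)⁻¹
    have hQ : ∀ m, Q * r m = r m * Q := fun m => by
      have h1 : (r ⟨π b, b.2⟩)⁻¹ * r m =
          r ((⟨π b, b.2⟩ : M)⁻¹ * m * ⟨π b, b.2⟩) * (r ⟨π b, b.2⟩)⁻¹ := by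
        simp [mul_assoc]
      simp only [Q]
      rw [mul_assoc, h1, ← mul_assoc, hE, ← mul_assoc]
      congr 3
      ext
      simp [MulAut.conjNormal_apply, mul_assoc]
    obtain ⟨c, hc⟩ := schur Q fun m => by
      exact congrArg Units.val (hQ m)
    have hc0 : c ≠ 0 := by
      rintro rfl
      rw [zero_smul] at hc
      exact Q.ne_zero hc
    refine ⟨Units.mk0 c hc0, ?_⟩
    have : Q = s (Units.mk0 c hc0) := by
      ext1
      rw [hc]
      simp [s, Algebra.algebraMap_eq_smul_one]
    rw [← this]
    simp [Q]
  choose cf hcf using hBs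
  have hcu : ∀ (b : B) (c : ℂˣ), π2 b = s c * r ⟨π b, b.2⟩ → cf b = c := fun b c hc => by
    rw [hcf b] at hc
    exact hs (mul_right_cancel hc)
  let ϕ : B →* ℂˣ := MonoidHom.mk' cf fun a b => by
    apply hcu
    have : (⟨π ((a * b : B) : E), (a * b).2⟩ : M) = ⟨π a, a.2⟩ * ⟨π b, b.2⟩ := by
      ext; simp
    rw [this, map_mul, map_mul, Subgroup.coe_mul, map_mul, hcf a, hcf b]
    rw [mul_assoc, mul_assoc, ← mul_assoc (r _) (s _), ← hsc, mul_assoc]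
  have hϕ : ∀ (g : E) (b : B), ϕ (MulAut.conjNormal g b) = ϕ b := fun g b => by
    apply hcu
    have e1 : (⟨π ((MulAut.conjNormal g b : B) : E), (MulAut.conjNormal g b).2⟩ : M)
        = MulAut.conjNormal (π g) ⟨π b, b.2⟩ := by
      ext; simp [MulAut.conjNormal_apply]
    rw [e1, MulAut.conjNormal_apply, map_mul, map_mul, map_inv, hcf b, mul_inv_eq_iff_eq_mul,
      mul_assoc (s _), ← hE, ← mul_assoc, ← hsc, mul_assoc]
    rfl
  let t : E →* ℂˣ := MonoidHom.transfer ϕ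
  have ht : ∀ b : B, t b = ϕ b ^ M.index := fun b => by
    rw [← hB]; exact transfer_of_invariant B ϕ hϕ b
  let d : E →* ℂˣ := (LinearMap.det.comp (actHom M ρ σ)).toHomUnits
  let k := Module.finrank ℂ (homSub M ρ σ)
  have hd : ∀ b : B, d b = (ϕ b ^ k)⁻¹ := fun b => by
    ext1
    have hact : actHom M ρ σ b = ((ϕ b)⁻¹ : ℂˣ).val • 1 := by
      ext f w
      have hb : π2 (b : E)⁻¹ = s (cf b)⁻¹ * (r ⟨π b, b.2⟩)⁻¹ := by
        rw [map_inv, hcf b, mul_inv_rev, hsc, map_inv]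
      have h1 : ((b : E)⁻¹).1.2.1 = ((cf b)⁻¹ : ℂˣ).val • (((r ⟨π b, b.2⟩)⁻¹ : (Module.End ℂ W)ˣ) : Module.End ℂ W) := by
        have := congrArg Units.val hb
        refine this.trans ?_
        exact (Algebra.smul_def _ _).symm
      change σ (π b) (f.1 (((b : E)⁻¹).1.2.1 w)) = ((cf b)⁻¹ : ℂˣ).val • f.1 w
      rw [h1, LinearMap.smul_apply, map_smul, map_smul]
      congr 1
      have h2 := LinearMap.congr_fun (f.2 ⟨π b, b.2⟩)
        ((((r ⟨π b, b.2⟩)⁻¹ : (Module.End ℂ W)ˣ) : Module.End ℂ W) w)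
      simp only [LinearMap.comp_apply] at h2
      rw [← h2, ← hr, ← Module.End.mul_apply, Units.mul_inv, Module.End.one_apply]
    change LinearMap.det (actHom M ρ σ b) = _
    rw [hact, LinearMap.det_smul]
    simp [k]
  -- Bezout
  have hbez : ∃ x y : ℤ, -(k * x) + M.index * y = 1 := by
    refine ⟨-Nat.gcdA k M.index, Nat.gcdB k M.index, ?_⟩
    have := Nat.gcd_eq_gcd_ab k M.index
    rw [hk] at this
    push_cast at this
    linarith
  obtain ⟨x, y, hxy⟩ := hbez
  let l : E →* ℂˣ := d ^ x * t ^ y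
  have hl : ∀ b : B, l b = ϕ b := fun b => by
    have : l b = d b ^ x * t b ^ y := rfl
    rw [this, ht, hd, ← zpow_natCast, ← zpow_natCast, ← zpow_neg, ← zpow_mul, ← zpow_mul,
      ← zpow_add, neg_mul, hxy, zpow_one]
  -- the section
  let F : E →* (Module.End ℂ W)ˣ := MonoidHom.mk' (fun e => s (l e)⁻¹ * π2 e) fun a b => by
    rw [map_mul, map_mul, mul_inv, map_mul, mul_assoc, mul_assoc, ← mul_assoc (π2 a), ← hsc]
    simp only [mul_assoc]
  have hF : ∀ b : B, F b = r ⟨π b, b.2⟩ := fun b => by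
    change s (l b)⁻¹ * π2 b = _
    rw [hl, hcf, ← mul_assoc, ← map_mul]
    change s ((cf b)⁻¹ * cf b) * _ = _
    simp
  have hker : ∀ a : E, π a = 1 → F a = 1 := fun a ha => by
    have hm : a ∈ B := by
      change π a ∈ M
      rw [ha]; exact M.one_mem
    rw [hF ⟨a, hm⟩]
    have : (⟨π a, hm⟩ : M) = 1 := Subtype.ext ha
    exact (congrArg r this).trans (map_one r)
  let τ : H →* (Module.End ℂ W)ˣ := π.liftOfSurjective hπ ⟨F, fun a ha => hker a ha⟩
  have hτ : ∀ e, τ (π e) = F e := fun e => by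
    exact MonoidHom.liftOfRightInverse_comp_apply _ _ _ ⟨F, fun a ha => hker a ha⟩ e
  refine ⟨(Units.coeHom _).comp τ, fun m => ?_⟩
  obtain ⟨e, he⟩ := hπ m
  have hm : e ∈ B := by
    change π e ∈ M
    rw [he]; exact m.2
  change (τ (m : H)).val = _
  rw [← he, hτ, hF ⟨e, hm⟩, hr]
  congr 1
  exact Subtype.ext he

lemma linHom_inv_iff {G : Type} [Group G] {W V : Type} [AddCommGroup W] [Module ℂ W]
    [AddCommGroup V] [Module ℂ V] (ρ : Representation ℂ G W) (σ : Representation ℂ G V)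
    (f : W →ₗ[ℂ] V) :
    f ∈ (Representation.linHom ρ σ).invariants ↔ ∀ g, f ∘ₗ ρ g = σ g ∘ₗ f := by
  rw [Representation.mem_invariants]
  constructor
  · intro h g
    have := h g
    rw [Representation.linHom_apply] at this
    nth_rewrite 1 [← this]
    ext w
    simp [← Module.End.mul_apply, ← map_mul]
  · intro h g
    rw [Representation.linHom_apply, h, ← LinearMap.comp_assoc, ← Module.End.mul_eq_comp, ← map_mul]
    simp [Module.End.one_eq_id]

lemma finrank_inv_of_simple {G : Type} [Group G] [Fintype G] (X : FDRep ℂ G) :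
    CategoryTheory.Simple X ↔
      Module.finrank ℂ (Representation.linHom X.ρ X.ρ).invariants = 1 := by
  rw [FDRep.simple_iff_end_is_rank_one,
    (Representation.linHom.invariantsEquivFDRepHom X X).finrank_eq]

lemma schur_of_simple {G : Type} [Group G] [Fintype G] (X : FDRep ℂ G)
    (hX : CategoryTheory.Simple X) :
    Nontrivial X ∧ ∀ f : Module.End ℂ X, (∀ g, f * X.ρ g = X.ρ g * f) → ∃ c : ℂ, f = c • 1 := by
  have h := (finrank_inv_of_simple X).1 hX
  have hnt : Nontrivial X := by
    by_contra hn
    rw [not_nontrivial_iff_subsingleton] at hn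
    rw [Module.finrank_zero_of_subsingleton] at h
    exact zero_ne_one h
  refine ⟨hnt, fun f hf => ?_⟩
  let i : (Representation.linHom X.ρ X.ρ).invariants :=
    ⟨(1 : Module.End ℂ X), (linHom_inv_iff _ _ _).2 fun g => rfl⟩
  have hi : i ≠ 0 := fun h0 => by
    have : (1 : Module.End ℂ X) = 0 := congrArg Subtype.val h0
    exact one_ne_zero this
  obtain ⟨c, hc⟩ := (finrank_eq_one_iff_of_nonzero' i hi).1 h
    ⟨f, (linHom_inv_iff _ _ _).2 hf⟩
  exact ⟨c, (congrArg Subtype.val hc).symm⟩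

lemma simple_of_schur {G : Type} [Group G] [Fintype G] {W : Type} [AddCommGroup W] [Module ℂ W]
    [FiniteDimensional ℂ W] [Nontrivial W] (ρ : G →* Module.End ℂ W)
    (h : ∀ f : Module.End ℂ W, (∀ g, f * ρ g = ρ g * f) → ∃ c : ℂ, f = c • 1) :
    CategoryTheory.Simple (FDRep.of ρ) := by
  rw [finrank_inv_of_simple]
  change Module.finrank ℂ (Representation.linHom (ρ : Representation ℂ G W) ρ).invariants = 1
  let i : (Representation.linHom (ρ : Representation ℂ G W) ρ).invariants :=
    ⟨(1 : Module.End ℂ W), (linHom_inv_iff _ _ _).2 fun g => rfl⟩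
  have hi : i ≠ 0 := fun h0 => by
    have : (1 : Module.End ℂ W) = 0 := congrArg Subtype.val h0
    exact one_ne_zero this
  rw [finrank_eq_one_iff_of_nonzero' i hi]
  rintro ⟨f, hf⟩
  obtain ⟨c, hc⟩ := h f ((linHom_inv_iff _ _ _).1 hf)
  exact ⟨c, Subtype.ext hc.symm⟩

lemma exists_intertwiner {G : Type} [Group G] [Fintype G] (X : FDRep ℂ G)
    (hX : CategoryTheory.Simple X) (a : G →* G) (ha : ∀ g, X.character (a g) = X.character g) :
    ∃ P : (Module.End ℂ X)ˣ, ∀ g, (P : Module.End ℂ X) * X.ρ g = X.ρ (a g) * P := by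
  let X' : FDRep ℂ G := FDRep.of (X.ρ.comp a)
  have hc : X'.character = X.character := funext fun g => ha g
  have hX' : CategoryTheory.Simple X' := by
    rw [FDRep.simple_iff_char_is_norm_one, hc]
    exact (FDRep.simple_iff_char_is_norm_one X).1 hX
  have := invertibleOfNonzero (NeZero.ne (Nat.card G : ℂ))
  have h1 := FDRep.char_orthonormal X X'
  have h2 := FDRep.char_orthonormal X X
  rw [hc, h2, if_pos ⟨CategoryTheory.Iso.refl X⟩] at h1
  have hne : Nonempty (X ≅ X') := by
    by_contra hn
    rw [if_neg hn] at h1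
    exact one_ne_zero h1
  obtain ⟨i⟩ := hne
  let e₀ := FDRep.isoToLinearEquiv i
  let e : X ≃ₗ[ℂ] X := e₀
  refine ⟨(LinearMap.GeneralLinearGroup.generalLinearEquiv ℂ X).symm e, fun g => ?_⟩
  have h := FDRep.Iso.conj_ρ i g
  ext w
  have h' := LinearMap.congr_fun h (e w)
  change X.ρ (a g) (e w) = e (X.ρ g (e.symm (e w))) at h'
  rw [e.symm_apply_apply] at h'
  exact h'.symm

/-- Lemma 2.2 (Isaacs Cor. 11.29 application): if `G/N` is a `p`-group, `G = NH`,
`M = N ⊓ H`, `θ ∈ Irr N` is `G`-invariant, `φ ∈ Irr M` is `H`-invariant with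
`p ∤ [θ|_M, φ]`, and `θ` extends to `G`, then `φ` extends to `H`. -/
theorem stmt_0 {G : Type} [Group G] [Fintype G] (p : ℕ) (hp : p.Prime)
    (N : Subgroup G) [N.Normal] (hq : IsPGroup p (G ⧸ N))
    (H : Subgroup G) (hGNH : ∀ g : G, ∃ n ∈ N, ∃ h ∈ H, g = n * h)
    (θ : N → ℂ) (hθ : IsIrrChar θ)
    (hθinv : ∀ g : G, ∀ n m : N, (m : G) = g * (n : G) * g⁻¹ → θ m = θ n)
    (φ : (N ⊓ H : Subgroup G) → ℂ) (hφ : IsIrrChar φ)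
    (hφinv : ∀ h ∈ H, ∀ n m : (N ⊓ H : Subgroup G), (m : G) = h * (n : G) * h⁻¹ → φ m = φ n)
    (hmult : ∃ k : ℕ,
      charInner (N ⊓ H : Subgroup G) (fun x => θ ⟨(x : G), (Subgroup.mem_inf.mp x.2).1⟩) φ = k ∧
      ¬ p ∣ k)
    (hext : ∃ χ : G → ℂ, IsIrrChar χ ∧ ∀ n : N, χ (n : G) = θ n) :
    ∃ μ : H → ℂ, IsIrrChar μ ∧
      ∀ m : (N ⊓ H : Subgroup G), μ ⟨(m : G), (Subgroup.mem_inf.mp m.2).2⟩ = φ m := by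
  obtain ⟨X, hX, rfl⟩ := hφ
  obtain ⟨χ, ⟨Y, _, rfl⟩, hχ⟩ := hext
  obtain ⟨k, hk, hpk⟩ := hmult
  obtain ⟨hnt, hsch⟩ := schur_of_simple X hX
  let M : Subgroup H := N.subgroupOf H
  let j : M →* (N ⊓ H : Subgroup G) :=
    { toFun := fun m => ⟨m.1.1, Subgroup.mem_inf.2 ⟨m.2, m.1.2⟩⟩
      map_one' := rfl
      map_mul' := fun _ _ => rfl }
  have hj : ∀ m : (N ⊓ H : Subgroup G), ∃ m' : M, j m' = m ∧ (m' : H) = ⟨m, m.2.2⟩ := fun m =>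
    ⟨⟨⟨m, m.2.2⟩, m.2.1⟩, rfl, rfl⟩
  let ρ : M →* Module.End ℂ X := X.ρ.comp j
  let σ : H →* Module.End ℂ Y := Y.ρ.comp H.subtype
  let σ' : Representation ℂ (N ⊓ H : Subgroup G) Y := Y.ρ.comp (N ⊓ H : Subgroup G).subtype
  have hU : homSub M ρ σ = (Representation.linHom X.ρ σ').invariants := by
    ext f
    rw [linHom_inv_iff]
    constructor
    · intro h m
      obtain ⟨m', rfl, hm'⟩ := hj m
      exact h m'
    · intro h m
      exact h (j m)
  have hfin : Module.finrank ℂ (homSub M ρ σ) = k := by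
    rw [hU, ← Nat.cast_inj (R := ℂ), ← hk]
    have := invertibleOfNonzero (NeZero.ne (Nat.card (N ⊓ H : Subgroup G) : ℂ))
    rw [← Representation.card_inv_mul_sum_char_eq_finrank, charInner]
    congr 1
    refine Finset.sum_congr rfl fun g _ => ?_
    rw [Representation.char_linHom, mul_comm, ← hχ]
    congr 1
    exact (conj_trace_rep X.ρ g).symm
  obtain ⟨n, hn⟩ : ∃ n, M.index = p ^ n := by
    have : Fact p.Prime := ⟨hp⟩
    obtain ⟨n, hn⟩ := IsPGroup.iff_card.1 hq
    have hd : M.index ∣ p ^ n := by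
      rw [← hn]
      exact Subgroup.relIndex_dvd_index_of_normal N H
    obtain ⟨i, _, hi⟩ := (Nat.dvd_prime_pow hp).1 hd
    exact ⟨i, hi⟩
  have hcop : Nat.Coprime (Module.finrank ℂ (homSub M ρ σ)) M.index := by
    rw [hfin, hn]
    exact Nat.Coprime.pow_right _ ((Nat.Prime.coprime_iff_not_dvd hp).2 hpk).symm
  obtain ⟨τ, hτ⟩ := core_ext M ρ σ
    (fun f hf => hsch f fun g => by
      obtain ⟨m', rfl, _⟩ := hj g
      exact hf m')
    (fun h => by
      let a : (N ⊓ H : Subgroup G) →* (N ⊓ H : Subgroup G) :=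
        { toFun := fun m => ⟨h * m * h⁻¹, Subgroup.mem_inf.2
            ⟨Subgroup.Normal.conj_mem inferInstance _ m.2.1 _,
              H.mul_mem (H.mul_mem h.2 m.2.2) (H.inv_mem h.2)⟩⟩
          map_one' := by ext; simp
          map_mul' := fun x y => by ext; simp }
      obtain ⟨P, hP⟩ := exists_intertwiner X hX a fun g => hφinv h h.2 g (a g) rfl
      exact ⟨P, fun m => hP (j m)⟩) hcop
  refine ⟨(FDRep.of τ).character, ⟨FDRep.of τ, simple_of_schur τ fun f hf => hsch f fun g => ?_, rfl⟩,
    fun m => ?_⟩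
  · obtain ⟨m', rfl, _⟩ := hj g
    have := hf m'
    rw [hτ] at this
    exact this
  · obtain ⟨m', rfl, hm'⟩ := hj m
    rw [← hm']
    change LinearMap.trace ℂ X (τ m') = LinearMap.trace ℂ X (X.ρ (j m'))
    rw [hτ]
    rfl
end
end

section
/- Let G be a finite group, N ⊴ G with G/N a p-group for a prime p, and let φ ∈ Irr(N) be G-invariant. If μ ∈ Irr(G) lies over φ and p does not divide [μ|_N, φ], then μ|_N = φ, i.e., μ is an extension of φ. -/
open scoped BigOperators Classical

noncomputable section

lemma diag_of_pow_eq_one {V : Type*} [AddCommGroup V] [Module ℂ V] [FiniteDimensional ℂ V]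
    (A : Module.End ℂ V) (m : ℕ) (hm : 0 < m) (hA : A ^ m = 1) :
    ⨆ z : ℂ, A.eigenspace z = ⊤ := by
  have hss : A.IsSemisimple := by
    apply Module.End.isSemisimple_of_squarefree_aeval_eq_zero (p := (Polynomial.X ^ m - 1 : Polynomial ℂ))
    · apply Polynomial.Separable.squarefree
      exact Polynomial.separable_X_pow_sub_C (1:ℂ) (by exact_mod_cast hm.ne') one_ne_zero
    · simp [hA]
  rw [← Module.End.iSup_maxGenEigenspace_eq_top A]
  congr 1; ext1 z
  rw [hss.isFinitelySemisimple.maxGenEigenspace_eq_eigenspace]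

lemma eig_pow {V : Type*} [AddCommGroup V] [Module ℂ V] 
    (A : Module.End ℂ V) (z : ℂ) (v : V) (hv : A v = z • v) (n : ℕ) : (A ^ n) v = z ^ n • v := by
  induction n with
  | zero => simp
  | succ n ih => rw [pow_succ', Module.End.mul_apply, ih, map_smul, hv, smul_smul, pow_succ]

lemma eig_root {V : Type*} [AddCommGroup V] [Module ℂ V]
    (A : Module.End ℂ V) (z : ℂ) (v : V) (hv : A v = z • v) (hv0 : v ≠ 0) (n : ℕ)
    (hA : A ^ n = 1) : z ^ n = 1 := by
  have := eig_pow A z v hv n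
  rw [hA, Module.End.one_apply] at this
  have h3 : (z ^ n - 1) • v = 0 := by
    rw [sub_smul, ← this, one_smul, sub_self]
  rcases smul_eq_zero.1 h3 with h | h
  · exact sub_eq_zero.1 h
  · exact absurd h hv0

lemma conj_trace {V : Type*} [AddCommGroup V] [Module ℂ V] [FiniteDimensional ℂ V]
    (A : Module.End ℂ V) (m : ℕ) (hA : A ^ (m+1) = 1) :
    LinearMap.trace ℂ V (A ^ m) = (starRingEnd ℂ) (LinearMap.trace ℂ V A) := by
  have hInternal : DirectSum.IsInternal (fun z : ℂ => A.eigenspace z) :=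
    DirectSum.isInternal_submodule_of_iSupIndep_of_iSup_eq_top A.eigenspaces_iSupIndep
      (diag_of_pow_eq_one A (m+1) (by omega) hA)
  have hfin : {z : ℂ | A.eigenspace z ≠ ⊥}.Finite :=
    WellFoundedGT.finite_ne_bot_of_iSupIndep A.eigenspaces_iSupIndep
  have h1 : ∀ (n : ℕ) (z : ℂ), Set.MapsTo (A ^ n) (A.eigenspace z) (A.eigenspace z) := by
    intro n z v hv
    have hv' := Module.End.mem_eigenspace_iff.1 hv
    rw [eig_pow A z v hv']
    exact Submodule.smul_mem _ _ hv
  have h2 : ∀ (n : ℕ) (z : ℂ), LinearMap.trace ℂ _ ((A ^ n).restrict (h1 n z)) =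
      z ^ n * Module.finrank ℂ (A.eigenspace z) := by
    intro n z
    have : (A ^ n).restrict (h1 n z) = z ^ n • LinearMap.id := by
      ext v
      exact eig_pow A z v (Module.End.mem_eigenspace_iff.1 v.2) n
    rw [this, map_smul, LinearMap.trace_id, smul_eq_mul]
  rw [LinearMap.trace_eq_sum_trace_restrict' hInternal hfin (h1 m)]
  conv_rhs => rw [← pow_one A]
  rw [LinearMap.trace_eq_sum_trace_restrict' hInternal hfin (h1 1), map_sum]
  refine Finset.sum_congr rfl fun z hz => ?_
  rw [h2, h2, map_mul, map_natCast, pow_one]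
  congr 1
  have hz' : A.eigenspace z ≠ ⊥ := by simpa using hz
  obtain ⟨v, hv, hv0⟩ := Submodule.exists_mem_ne_zero_of_ne_bot hz'
  have hz1 : z ^ (m+1) = 1 := by
    exact eig_root A z v (Module.End.mem_eigenspace_iff.1 hv) hv0 (m+1) hA
  have hn : ‖z‖ = 1 := Complex.norm_eq_one_of_pow_eq_one hz1 (by omega)
  have hz0 : z ≠ 0 := by rintro rfl; simp at hn
  have : z * (starRingEnd ℂ) z = 1 := by rw [Complex.mul_conj, Complex.normSq_eq_norm_sq, hn]; simp
  apply mul_left_cancel₀ hz0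
  rw [this, ← pow_succ', hz1]

lemma char_conj_inv {G V : Type*} [Group G] [Finite G] [AddCommGroup V] [Module ℂ V]
    [FiniteDimensional ℂ V] (ρ : Representation ℂ G V) (g : G) :
    (starRingEnd ℂ) (ρ.character g) = ρ.character g⁻¹ := by
  have hpos : 0 < orderOf g := orderOf_pos g
  obtain ⟨m, hm⟩ : ∃ m, orderOf g = m + 1 := ⟨orderOf g - 1, by omega⟩
  have hg : g ^ (m+1) = 1 := by rw [← hm, pow_orderOf_eq_one]
  have hinv : g⁻¹ = g ^ m := by
    rw [inv_eq_iff_mul_eq_one, ← pow_succ', hg]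
  rw [Representation.character, Representation.character, hinv, map_pow, conj_trace]
  rw [← map_pow, hg, map_one]

lemma irr_of_finrank {G V : Type*} [Group G] [Finite G] [AddCommGroup V] [Module ℂ V]
    [FiniteDimensional ℂ V] (ρ : Representation ℂ G V)
    (h : ∀ T : Module.End ℂ V, (∀ g, T * ρ g = ρ g * T) → ∃ c : ℂ, T = c • 1)
    (hV : Nontrivial V) : ρ.IsIrreducible := by
  have : NeZero (Nat.card G : ℂ) := ⟨by exact_mod_cast Nat.card_pos.ne'⟩
  have hss : ρ.IsSemisimpleRepresentation := inferInstance
  have : Nontrivial (Subrepresentation ρ) := by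
    refine ⟨⊥, ⊤, fun hh => ?_⟩
    have := congrArg Subrepresentation.toSubmodule hh
    exact bot_ne_top (α := Submodule ℂ V) this
  refine ⟨fun W => ?_⟩
  obtain ⟨W', hW⟩ := exists_isCompl W
  have hc : IsCompl W.toSubmodule W'.toSubmodule := by
    refine ⟨disjoint_iff.2 ?_, codisjoint_iff.2 ?_⟩
    · rw [← Subrepresentation.toSubmodule_inf, hW.inf_eq_bot]; rfl
    · rw [← Subrepresentation.toSubmodule_sup, hW.sup_eq_top]; rfl
  obtain ⟨c, hcT⟩ := h (Submodule.projection _ _ hc) (by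
    intro g
    ext v
    obtain ⟨w, w', rfl⟩ : ∃ (w : W.toSubmodule) (w' : W'.toSubmodule), v = w + w' := by
      have : v ∈ W.toSubmodule ⊔ W'.toSubmodule := by rw [hc.sup_eq_top]; trivial
      obtain ⟨a, ha, b, hb, rfl⟩ := Submodule.mem_sup.1 this
      exact ⟨⟨a, ha⟩, ⟨b, hb⟩, rfl⟩
    have e1 := Submodule.projection_apply_left hc ⟨_, W.apply_mem_toSubmodule g w.2⟩
    have e2 := Submodule.projection_apply_right hc ⟨_, W'.apply_mem_toSubmodule g w'.2⟩
    have e3 := Submodule.projection_apply_left hc w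
    have e4 := Submodule.projection_apply_right hc w'
    simp only [Module.End.mul_apply, map_add] at *
    rw [e1, e2, e3, e4]; simp)
  by_cases c0 : c = 0
  · left
    apply Subrepresentation.toSubmodule_injective
    change W.toSubmodule = ⊥
    rw [eq_bot_iff]
    intro w hw
    have e3 := Submodule.projection_apply_left hc ⟨w, hw⟩
    rw [hcT, c0] at e3
    simpa using e3.symm
  · right
    apply Subrepresentation.toSubmodule_injective
    change W.toSubmodule = ⊤
    rw [eq_top_iff]
    intro w _
    have : Submodule.projection _ _ hc w ∈ W.toSubmodule := Submodule.projection_apply_mem hc w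
    rw [hcT] at this
    simpa [c0] using W.toSubmodule.smul_mem c⁻¹ this

lemma group_step {G : Type*} [Group G] [Finite G] (p : ℕ) (hp : p.Prime) (N : Subgroup G) [N.Normal]
    (hq : IsPGroup p (G ⧸ N)) (K : Subgroup G) (hNK : N < K) :
    ∃ (H : Subgroup G) (g : G), N ≤ H ∧ H < K ∧ g ∈ K ∧ (∀ h, h ∈ H ↔ g * h * g⁻¹ ∈ H) ∧
      g ^ p ∈ H ∧ ∀ S : Subgroup G, H ≤ S → g ∈ S → K ≤ S := by
  have := Fact.mk hp
  obtain ⟨H, ⟨hNH, hHK⟩, hmax⟩ := Set.Finite.exists_maximal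
    (Set.toFinite {H : Subgroup G | N ≤ H ∧ H < K}) ⟨N, le_rfl, hNK⟩
  let f := QuotientGroup.mk' N
  have hker : f.ker = N := QuotientGroup.ker_mk' N
  have hKp : IsPGroup p (K.map f) := hq.to_subgroup _
  have hnil := hKp.isNilpotent
  have hnc : NormalizerCondition (K.map f) := Group.normalizerCondition_of_isNilpotent
  have hcm : ∀ S : Subgroup G, N ≤ S → (S.map f).comap f = S := fun S hS => by
    rw [Subgroup.comap_map_eq, hker, sup_eq_left.2 hS]
  have hlt : (H.map f).subgroupOf (K.map f) < ⊤ := by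
    rw [lt_top_iff_ne_top, Ne, Subgroup.subgroupOf_eq_top]
    intro hle
    have := Subgroup.comap_mono (f := f) hle
    rw [hcm _ hNH, hcm _ hNK.le] at this
    exact absurd this (not_le_of_gt hHK)
  obtain ⟨y, hy1, hy2⟩ := SetLike.exists_of_lt (hnc _ hlt)
  obtain ⟨y, x, hxK, rfl⟩ := y
  have hxH : x ∉ H := by
    intro hx
    exact hy2 (Subgroup.mem_subgroupOf.2 ⟨x, hx, rfl⟩)
  have hmem : ∀ h, h ∈ H ↔ f h ∈ H.map f := by
    intro h
    conv_lhs => rw [← hcm H hNH]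
    rfl
  have hxn : ∀ h, h ∈ K → (h ∈ H ↔ x * h * x⁻¹ ∈ H) := by
    intro h hhK
    have := Subgroup.mem_normalizer_iff.1 hy1 ⟨f h, h, hhK, rfl⟩
    simp only [Subgroup.mem_subgroupOf] at this
    rw [hmem, hmem]
    simpa using this
  have hxn' : ∀ h, h ∈ H ↔ x * h * x⁻¹ ∈ H := by
    intro h
    by_cases hhK : h ∈ K
    · exact hxn h hhK
    · constructor
      · intro hh; exact absurd (hHK.le hh) hhK
      · intro hh
        exfalso; apply hhK
        have := K.mul_mem (K.mul_mem (K.inv_mem hxK) (hHK.le hh)) hxK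
        simpa [mul_assoc] using this
  have hex : ∃ n, x ^ (p ^ n) ∈ H := by
    obtain ⟨n, hn⟩ := hq (f x)
    refine ⟨n, hNH ?_⟩
    rw [← hker, MonoidHom.mem_ker, map_pow, hn]
  obtain ⟨j, hj⟩ : ∃ j, Nat.find hex = j + 1 := by
    refine Nat.exists_eq_succ_of_ne_zero fun h0 => hxH ?_
    have := Nat.find_spec hex
    rw [h0] at this
    simpa using this
  have hgH : x ^ (p ^ j) ∉ H := Nat.find_min hex (by omega)
  have hgp : (x ^ (p ^ j)) ^ p ∈ H := by
    have := Nat.find_spec hex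
    rw [hj] at this
    rwa [← pow_mul, ← pow_succ]
  have hpown : ∀ n : ℕ, ∀ h, h ∈ H ↔ x ^ n * h * (x ^ n)⁻¹ ∈ H := by
    intro n
    induction n with
    | zero => simp
    | succ n ih =>
      intro h
      rw [ih h, hxn', pow_succ']
      simp [mul_assoc]
  refine ⟨H, x ^ (p ^ j), hNH, hHK, K.pow_mem hxK _, hpown _, hgp, fun S hHS hgS => ?_⟩
  by_contra hKS
  apply hgH
  have h1 : S ⊓ K < K := lt_of_le_of_ne inf_le_right (fun h => hKS (inf_eq_right.1 h))
  exact hmax ⟨hNH.trans (le_inf hHS hHK.le), h1⟩ (le_inf hHS hHK.le) ⟨hgS, K.pow_mem hxK _⟩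

lemma det_arg {S : Type*} [AddCommGroup S] [Module ℂ S] [FiniteDimensional ℂ S]
    (L Γ : Module.End ℂ S) (hL : Function.Injective L) (hΓ : Function.Injective Γ) (z : ℂ)
    (h : Γ * L = z • (L * Γ)) : z ^ Module.finrank ℂ S = 1 := by
  have key : ∀ T : Module.End ℂ S, Function.Injective T → LinearMap.det T ≠ 0 := by
    intro T hT
    have : IsUnit T := (LinearMap.isUnit_iff_ker_eq_bot T).2 (LinearMap.ker_eq_bot.2 hT)
    exact (this.map LinearMap.det).ne_zero
  have h1 := congrArg LinearMap.det h
  rw [LinearMap.det_smul, map_mul, map_mul, mul_comm (LinearMap.det L)] at h1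
  have h2 := mul_ne_zero (key _ hΓ) (key _ hL)
  exact mul_right_cancel₀ h2 (by rw [one_mul, ← h1])

/-- Either every operator commuting with `H` commutes with `g`, or there is a
nontrivial eigenoperator. -/
lemma exists_eig {G V : Type*} [Group G] [AddCommGroup V] [Module ℂ V] [FiniteDimensional ℂ V]
    (ρ : Representation ℂ G V) (H : Subgroup G) (g : G) (p : ℕ) (hp : p.Prime)
    (hn : ∀ h, h ∈ H ↔ g * h * g⁻¹ ∈ H) (hgp : g ^ p ∈ H)
    (T : Module.End ℂ V) (hT : ∀ h ∈ H, T * ρ h = ρ h * T) (hTg : T * ρ g ≠ ρ g * T) :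
    ∃ (b : Module.End ℂ V) (z : ℂ), b ≠ 0 ∧ IsPrimitiveRoot z p ∧
      (∀ h ∈ H, b * ρ h = ρ h * b) ∧ ρ g * b = z • (b * ρ g) := by
  let B : Submodule ℂ (Module.End ℂ V) :=
    { carrier := {T | ∀ h ∈ H, T * ρ h = ρ h * T}
      add_mem' := by
        intro a b ha hb h hh
        rw [add_mul, mul_add, ha h hh, hb h hh]
      zero_mem' := by intro h hh; simp
      smul_mem' := by
        intro c a ha h hh
        rw [smul_mul_assoc, mul_smul_comm, ha h hh] }
  have hgg : ρ g * ρ g⁻¹ = 1 := by rw [← map_mul]; simp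
  have hgg' : ρ g⁻¹ * ρ g = 1 := by rw [← map_mul]; simp
  let cj : Module.End ℂ (Module.End ℂ V) :=
    LinearMap.mulLeft ℂ (ρ g) * LinearMap.mulRight ℂ (ρ g⁻¹)
  have hcj : ∀ T, cj T = ρ g * T * ρ g⁻¹ := fun T => (mul_assoc _ _ _).symm
  have hcjn : ∀ n T, (cj ^ n) T = ρ (g ^ n) * T * ρ (g ^ n)⁻¹ := by
    intro n T
    induction n with
    | zero => simp
    | succ n ih =>
      rw [pow_succ', Module.End.mul_apply, ih, hcj, pow_succ', map_mul, mul_inv_rev, map_mul]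
      simp only [mul_assoc]
  have hmaps : ∀ T ∈ B, cj T ∈ B := by
    intro T hT h hh
    have h' : g⁻¹ * h * g ∈ H := by
      rw [hn]; simpa [mul_assoc] using hh
    have := hT _ h'
    rw [hcj]
    calc ρ g * T * ρ g⁻¹ * ρ h = ρ g * (T * ρ (g⁻¹ * h * g)) * ρ g⁻¹ := by
          simp only [map_mul, mul_assoc]; rw [hgg, mul_one]
      _ = ρ h * (ρ g * T * ρ g⁻¹) := by
          rw [this]; simp only [map_mul, mul_assoc]
          rw [← mul_assoc (ρ g) (ρ g⁻¹), hgg, one_mul]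
  let σ : Module.End ℂ B := cj.restrict hmaps
  have hσp : σ ^ p = 1 := by
    rw [Module.End.pow_restrict]
    ext1 ⟨T, hT⟩
    apply Subtype.ext
    change (cj ^ p) T = T
    rw [hcjn, ← hT _ hgp, mul_assoc, ← map_mul]
    simp
  have htop := diag_of_pow_eq_one σ p hp.pos hσp
  by_contra hno
  have hz : ∀ z : ℂ, z ≠ 1 → σ.eigenspace z = ⊥ := by
    intro z hz1
    by_contra hne
    obtain ⟨v, hv, hv0⟩ := Submodule.exists_mem_ne_zero_of_ne_bot hne
    rw [Module.End.mem_eigenspace_iff] at hv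
    apply hno
    refine ⟨v.1, z, fun h => hv0 (Subtype.ext h), ?_, v.2, ?_⟩
    · have h4 : z ^ p = 1 := eig_root σ z v hv hv0 p hσp
      have := Fact.mk hp
      rw [IsPrimitiveRoot.iff_orderOf]
      exact orderOf_eq_prime h4 hz1
    · have h1 : cj v.1 = z • v.1 := congrArg Subtype.val hv
      rw [hcj] at h1
      rw [← smul_mul_assoc, ← h1, mul_assoc, hgg', mul_one]
  have h1 : σ.eigenspace 1 = ⊤ := by
    rw [← htop]
    apply le_antisymm (le_iSup (fun z => σ.eigenspace z) 1)
    apply iSup_le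
    intro z
    by_cases h : z = 1
    · rw [h]
    · rw [hz z h]; exact bot_le
  have h2 : (⟨T, hT⟩ : B) ∈ σ.eigenspace 1 := by rw [h1]; trivial
  rw [Module.End.mem_eigenspace_iff, one_smul] at h2
  have h3 : cj T = T := congrArg Subtype.val h2
  apply hTg
  rw [hcj] at h3
  conv_lhs => rw [← h3]
  rw [mul_assoc, hgg', mul_one]

lemma dvd_of_eig {G V U : Type*} [Group G] [AddCommGroup V] [Module ℂ V] [FiniteDimensional ℂ V]
    [AddCommGroup U] [Module ℂ U] [FiniteDimensional ℂ U]
    (ρ : Representation ℂ G V) (N : Subgroup G) [N.Normal] (τ : Representation ℂ N U)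
    (g : G) (X : U ≃ₗ[ℂ] U)
    (hX : ∀ n : N, ∀ u, X (τ n u) = τ (MulAut.conjNormal g n) (X u))
    (p : ℕ) (z : ℂ) (hz : IsPrimitiveRoot z p) (b : Module.End ℂ V) (hb : Function.Injective b)
    (hbN : ∀ h ∈ N, b * ρ h = ρ h * b) (hbg : ρ g * b = z • (b * ρ g)) :
    p ∣ Module.finrank ℂ (Representation.IntertwiningMap τ (ρ.comp N.subtype)) := by
  let S : Submodule ℂ (U →ₗ[ℂ] V) :=
    { carrier := {f | ∀ (n : N) (u : U), f (τ n u) = ρ n (f u)}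
      add_mem' := by
        intro a b ha hb n u
        simp [ha n u, hb n u]
      zero_mem' := by intro n u; simp
      smul_mem' := by
        intro c a ha n u
        simp [ha n u] }
  let e : S ≃ₗ[ℂ] Representation.IntertwiningMap τ (ρ.comp N.subtype) :=
    { toFun := fun f => ⟨f.1, fun n => LinearMap.ext fun u => f.2 n u⟩
      invFun := fun f => ⟨f.toLinearMap, fun n u => LinearMap.congr_fun (f.2 n) u⟩
      map_add' := fun _ _ => rfl
      map_smul' := fun _ _ => rfl
      left_inv := fun _ => rfl
      right_inv := fun _ => rfl }
  rw [← e.finrank_eq]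
  let L : Module.End ℂ (U →ₗ[ℂ] V) :=
    { toFun := fun f => b ∘ₗ f
      map_add' := fun _ _ => LinearMap.comp_add _ _ _
      map_smul' := fun _ _ => LinearMap.comp_smul _ _ _ }
  let Γ : Module.End ℂ (U →ₗ[ℂ] V) :=
    { toFun := fun f => (ρ g) ∘ₗ f ∘ₗ X.symm.toLinearMap
      map_add' := fun _ _ => by ext; simp
      map_smul' := fun _ _ => by ext; simp }
  have hL : ∀ f ∈ S, L f ∈ S := by
    intro f hf n u
    change b (f (τ n u)) = ρ n (b (f u))
    rw [hf n u]
    exact LinearMap.congr_fun (hbN n n.2) (f u)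
  have hΓ : ∀ f ∈ S, Γ f ∈ S := by
    intro f hf n u
    change ρ g (f (X.symm (τ n u))) = ρ n (ρ g (f (X.symm u)))
    have h1 : X.symm (τ n u) = τ (MulAut.conjNormal g⁻¹ n) (X.symm u) := by
      rw [LinearEquiv.symm_apply_eq, hX, ← MulAut.mul_apply, ← map_mul]
      simp
    rw [h1, hf, ← Module.End.mul_apply, ← map_mul, ← Module.End.mul_apply, ← map_mul]
    congr 2
    simp [mul_assoc]
  have hρg : Function.Injective (ρ g) := by
    intro a c hac
    have := congrArg (ρ g⁻¹) hac
    rw [← Module.End.mul_apply, ← map_mul, ← Module.End.mul_apply, ← map_mul] at this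
    simpa using this
  rw [← hz.pow_eq_one_iff_dvd]
  apply det_arg (L.restrict hL) (Γ.restrict hΓ)
  · intro f f' hff
    apply Subtype.ext
    ext u
    apply hb
    exact LinearMap.congr_fun (congrArg Subtype.val hff) u
  · intro f f' hff
    apply Subtype.ext
    ext u
    apply hρg
    have := LinearMap.congr_fun (congrArg Subtype.val hff) (X u)
    change ρ g (f.1 (X.symm (X u))) = ρ g (f'.1 (X.symm (X u))) at this
    simpa using this
  · ext1 f
    apply Subtype.ext
    ext u
    exact LinearMap.congr_fun hbg (f.1 (X.symm u))

lemma norm_char_of_irr {G V : Type*} [Group G] [Fintype G] [AddCommGroup V] [Module ℂ V]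
    [FiniteDimensional ℂ V] (ρ : Representation ℂ G V)
    (h : (Nat.card G : ℂ)⁻¹ * ∑ g : G, ρ.character g * ρ.character g⁻¹ = 1) :
    ρ.IsIrreducible := by
  have := invertibleOfNonzero (NeZero.ne (Nat.card G : ℂ))
  rw [Representation.card_inv_mul_sum_char_mul_char_eq_finrank] at h
  have h1 : Module.finrank ℂ (Representation.IntertwiningMap ρ ρ) = 1 := by exact_mod_cast h
  have hV : Nontrivial V := by
    by_contra hV
    rw [not_nontrivial_iff_subsingleton] at hV
    have : Subsingleton (Representation.IntertwiningMap ρ ρ) :=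
      ⟨fun a b => by ext x; exact Subsingleton.elim _ _⟩
    rw [Module.finrank_zero_of_subsingleton] at h1
    omega
  apply irr_of_finrank ρ _ hV
  intro T hT
  have hid : Representation.IntertwiningMap.id ρ ≠ 0 := by
    intro h0
    obtain ⟨v, hv⟩ := exists_ne (0 : V)
    apply hv
    have := congrArg (fun f : Representation.IntertwiningMap ρ ρ => f v) h0
    simpa using this
  obtain ⟨c, hc⟩ := (finrank_eq_one_iff_of_nonzero' _ hid).1 h1 ⟨T, hT⟩
  exact ⟨c, (congrArg Representation.IntertwiningMap.toLinearMap hc).symm⟩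

lemma irr_of_simple {G : Type} [Group G] [Fintype G] (W : FDRep ℂ G)
    (h : CategoryTheory.Simple W) : Representation.IsIrreducible (W.ρ : Representation ℂ G W) := by
  apply norm_char_of_irr
  have := (FDRep.simple_iff_char_is_norm_one W).1 h
  have h2 : ∑ g : G, Representation.character (W.ρ : Representation ℂ G W) g *
    Representation.character (W.ρ : Representation ℂ G W) g⁻¹ = Nat.card G := this
  rw [h2, inv_mul_cancel₀ (NeZero.ne (Nat.card G : ℂ))]

lemma scalar_of_irr {G V : Type*} [Group G] [AddCommGroup V] [Module ℂ V]
    [FiniteDimensional ℂ V] (ρ : Representation ℂ G V) (hρ : ρ.IsIrreducible)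
    (T : Module.End ℂ V) (hT : ∀ g, T * ρ g = ρ g * T) : ∃ c : ℂ, T = c • 1 := by
  obtain ⟨c, hc⟩ := (Representation.IsIrreducible.algebraMap_intertwiningMap_bijective_of_isAlgClosed
    (ρ := ρ) (k := ℂ)).2 ⟨T, hT⟩
  refine ⟨c, ?_⟩
  have := congrArg Representation.IntertwiningMap.toLinearMap hc
  exact this.symm

/-- Invariance of the character gives an intertwiner with the conjugate. -/
lemma exists_X {G U : Type*} [Group G] [Fintype G] [AddCommGroup U] [Module ℂ U]
    [FiniteDimensional ℂ U] (N : Subgroup G) [N.Normal] (τ : Representation ℂ N U)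
    (hτ : τ.IsIrreducible) (g : G)
    (hinv : ∀ n : N, τ.character (MulAut.conjNormal g n) = τ.character n) :
    ∃ X : U ≃ₗ[ℂ] U, ∀ n : N, ∀ u, X (τ n u) = τ (MulAut.conjNormal g n) (X u) := by
  have := invertibleOfNonzero (NeZero.ne (Nat.card N : ℂ))
  let τ' : Representation ℂ N U := τ.comp (MulAut.conjNormal g : MulAut N).toMonoidHom
  have hch : τ'.character = τ.character := funext hinv
  have h1 := Representation.char_orthonormal τ τ
  rw [if_pos ⟨Representation.Equiv.refl τ⟩] at h1
  have hτ' : τ'.IsIrreducible := by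
    apply norm_char_of_irr
    rw [hch, h1]
  have h2 := Representation.char_orthonormal τ' τ
  rw [hch, h1] at h2
  by_cases hne : Nonempty (Representation.Equiv τ τ')
  · obtain ⟨E⟩ := hne
    exact ⟨E.toLinearEquiv, fun n u => E.toIntertwiningMap.isIntertwining _ _ n u⟩
  · rw [if_neg hne] at h2
    simp at h2

lemma irr_N {G U V : Type*} [Group G] [Fintype G] [AddCommGroup U] [Module ℂ U]
    [FiniteDimensional ℂ U] [AddCommGroup V] [Module ℂ V] [FiniteDimensional ℂ V]
    (p : ℕ) (hp : p.Prime) (N : Subgroup G) [N.Normal]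
    (hq : IsPGroup p (G ⧸ N)) (τ : Representation ℂ N U)
    (hτ : τ.IsIrreducible)
    (hinv : ∀ g : G, ∀ n : N, τ.character (MulAut.conjNormal g n) = τ.character n)
    (ρ : Representation ℂ G V) (hρ : ρ.IsIrreducible)
    (hk : ¬ p ∣ Module.finrank ℂ (Representation.IntertwiningMap τ (ρ.comp N.subtype))) :
    Representation.IsIrreducible (ρ.comp N.subtype : Representation ℂ N V) := by
  have hVn : Nontrivial V := by
    by_contra hV
    rw [not_nontrivial_iff_subsingleton] at hV
    exact bot_ne_top (α := Subrepresentation ρ)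
      (Subrepresentation.toSubmodule_injective (Subsingleton.elim _ _))
  obtain ⟨K, ⟨hNK, hK⟩, hmin⟩ := Set.Finite.exists_minimal
    (Set.toFinite {K : Subgroup G | N ≤ K ∧
      Representation.IsIrreducible (ρ.comp K.subtype : Representation ℂ K V)})
    (by
      refine ⟨⊤, le_top, ?_⟩
      apply irr_of_finrank _ _ hVn
      intro T hT
      exact scalar_of_irr ρ hρ T (fun g => hT ⟨g, trivial⟩))
  rcases hNK.eq_or_lt with h | hlt
  · subst h; exact hK
  exfalso
  obtain ⟨H, g, hNH, hHK, hgK, hn, hgp, hgen⟩ := group_step p hp N hq K hlt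
  apply not_le_of_gt hHK
  refine hmin ⟨hNH, ?_⟩ hHK.le
  apply irr_of_finrank _ _ hVn
  intro T hT
  have hTH : ∀ h ∈ H, T * ρ h = ρ h * T := fun h hh => hT ⟨h, hh⟩
  by_cases hTg : T * ρ g = ρ g * T
  · let S : Subgroup G :=
      { carrier := {x | T * ρ x = ρ x * T}
        mul_mem' := by
          intro x y hx hy
          simp only [Set.mem_ofPred_eq] at *
          rw [map_mul, ← mul_assoc, hx, mul_assoc, hy, mul_assoc]
        one_mem' := by simp
        inv_mem' := by
          intro x hx
          simp only [Set.mem_ofPred_eq] at *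
          have e1 : ρ x * ρ x⁻¹ = 1 := by rw [← map_mul]; simp
          have e2 : ρ x⁻¹ * ρ x = 1 := by rw [← map_mul]; simp
          calc T * ρ x⁻¹ = ρ x⁻¹ * (ρ x * T) * ρ x⁻¹ := by
                rw [← mul_assoc, e2, one_mul]
            _ = ρ x⁻¹ * T := by rw [← hx, mul_assoc, mul_assoc, e1, mul_one] }
    have hKS := hgen S hTH hTg
    exact scalar_of_irr _ hK T (fun x => hKS x.2)
  · exfalso
    obtain ⟨b, z, hb0, hz, hbH, hbg⟩ := exists_eig ρ H g p hp hn hgp T hTH hTg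
    have hz0 : z ≠ 0 := hz.ne_zero hp.ne_zero
    obtain ⟨X, hX⟩ := exists_X N τ hτ g (hinv g)
    refine hk (dvd_of_eig ρ N τ g X hX p z hz b ?_ (fun h hh => hbH h (hNH hh)) hbg)
    let S : Subgroup G :=
      { carrier := {x | ∀ v, b v = 0 ↔ b (ρ x v) = 0}
        mul_mem' := by
          intro x y hx hy v
          rw [map_mul, Module.End.mul_apply, ← hx, ← hy]
        one_mem' := by intro v; simp
        inv_mem' := by
          intro x hx v
          rw [hx (ρ x⁻¹ v), ← Module.End.mul_apply (ρ x), ← map_mul]; simp }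
    have hinj : ∀ x : G, ∀ v, ρ x v = 0 ↔ v = 0 := by
      intro x v
      constructor
      · intro h
        have := congrArg (ρ x⁻¹) h
        rw [← Module.End.mul_apply, ← map_mul] at this
        simpa using this
      · rintro rfl; simp
    have hKS : K ≤ S := by
      apply hgen S
      · intro h hh v
        rw [← Module.End.mul_apply, hbH h hh, Module.End.mul_apply, hinj]
      · intro v
        have := LinearMap.congr_fun hbg v
        simp only [Module.End.mul_apply, LinearMap.smul_apply] at this
        rw [← hinj g (b v), this, smul_eq_zero, or_iff_right hz0]
    let W : Subrepresentation (ρ.comp K.subtype : Representation ℂ K V) :=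
      { toSubmodule := LinearMap.ker b
        apply_mem_toSubmodule := fun x v hv => (hKS x.2 v).1 hv }
    rcases hK.eq_bot_or_eq_top W with h | h
    · exact LinearMap.ker_eq_bot.1 (congrArg Subrepresentation.toSubmodule h)
    · exact absurd (LinearMap.ker_eq_top.1 (congrArg Subrepresentation.toSubmodule h)) hb0

/-- Isaacs Cor. 11.29: `N ⊴ G`, `G/N` a `p`-group, `φ ∈ Irr N` `G`-invariant;
if `μ ∈ Irr G` lies over `φ` with `p ∤ [μ|_N, φ]`, then `μ|_N = φ`. -/
theorem stmt_1 {G : Type} [Group G] [Fintype G] (p : ℕ) (hp : p.Prime)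
    (N : Subgroup G) [N.Normal] (hq : IsPGroup p (G ⧸ N))
    (φ : N → ℂ) (hφ : IsIrrChar φ)
    (hφinv : ∀ g : G, ∀ n m : N, (m : G) = g * (n : G) * g⁻¹ → φ m = φ n)
    (μ : G → ℂ) (hμ : IsIrrChar μ)
    (hover : charInner N (charRes N μ) φ ≠ 0)
    (hmult : ∃ k : ℕ, charInner N (charRes N μ) φ = k ∧ ¬ p ∣ k) :
    ∀ n : N, μ (n : G) = φ n := by
  have := invertibleOfNonzero (NeZero.ne (Nat.card N : ℂ))
  obtain ⟨U, hU, rfl⟩ := hφ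
  obtain ⟨V, hV, rfl⟩ := hμ
  have hτ := irr_of_simple U hU
  have hρ := irr_of_simple V hV
  let τ : Representation ℂ N U := U.ρ
  let ρ : Representation ℂ G V := V.ρ
  let ρN : Representation ℂ N V := ρ.comp N.subtype
  have hin : charInner N (charRes N V.character) U.character =
      Module.finrank ℂ (Representation.IntertwiningMap τ ρN) := by
    rw [← Representation.card_inv_mul_sum_char_mul_char_eq_finrank, charInner]
    congr 1
    refine Finset.sum_congr rfl fun n _ => ?_
    rw [← char_conj_inv]
    rfl
  have hinv : ∀ g : G, ∀ n : N, τ.character (MulAut.conjNormal g n) = τ.character n :=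
    fun g n => hφinv g n _ (by simp)
  obtain ⟨k, hk, hpk⟩ := hmult
  rw [hin] at hk hover
  have hk' : Module.finrank ℂ (Representation.IntertwiningMap τ ρN) = k := by exact_mod_cast hk
  have hirr : ρN.IsIrreducible := irr_N p hp N hq τ hτ hinv ρ hρ (by rw [hk']; exact hpk)
  have h2 := Representation.char_orthonormal ρN τ
  rw [Representation.card_inv_mul_sum_char_mul_char_eq_finrank] at h2
  by_cases hne : Nonempty (Representation.Equiv τ ρN)
  · obtain ⟨E⟩ := hne
    intro n
    exact (congrFun (Representation.char_iso E) n).symm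
  · rw [if_neg hne] at h2
    exact absurd (by simpa using h2) hover
end
end

section
/- Let P be a finite p-group acting coprimely by automorphisms on a finite group G, and let Q ≤ P. If every P-invariant irreducible character of G coincides with the set of Q-invariant irreducible characters, i.e., Irr_P(G) = Irr_Q(G), then the fixed-point subgroups coincide: C_G(P) = C_G(Q). -/
open scoped BigOperators Classical

noncomputable section

section Helpers

open Representation

/-- A class function orthogonal to the character of an irreducible representation acts as zero. -/
lemma irr_act_zero {G V : Type} [Group G] [Fintype G] [AddCommGroup V] [Module ℂ V]
    [FiniteDimensional ℂ V] (σ : Representation ℂ G V) [σ.IsIrreducible] (f : G → ℂ)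
    (hf : ∀ g h, f (h * g * h⁻¹) = f g) (h0 : ∑ g, f g * σ.character g = 0) :
    ∑ g, f g • σ g = 0 := by
  let T : IntertwiningMap σ σ := ⟨∑ g, f g • σ g, by
    intro h
    simp only [← Module.End.mul_eq_comp]
    rw [Finset.sum_mul, Finset.mul_sum]
    refine Fintype.sum_equiv (MulAut.conj h⁻¹).toEquiv _ _ fun g => ?_
    have : f (h⁻¹ * g * h) = f g := by simpa using hf g h⁻¹
    simp only [MulEquiv.toEquiv_eq_coe, EquivLike.coe_coe, MulAut.conj_apply, inv_inv, this,
      smul_mul_assoc, mul_smul_comm]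
    congr 1
    rw [← map_mul, ← map_mul]
    congr 1
    group⟩
  obtain ⟨c, hc⟩ := (IsIrreducible.algebraMap_intertwiningMap_bijective_of_isAlgClosed
    (ρ := σ)).2 T
  have hT : ∑ g, f g • σ g = c • (LinearMap.id : V →ₗ[ℂ] V) := by
    have : T.toLinearMap = (algebraMap ℂ (IntertwiningMap σ σ) c).toLinearMap := by rw [hc]
    rw [Algebra.algebraMap_eq_smul_one] at this
    exact this
  have htr := congrArg (LinearMap.trace ℂ V) hT
  simp only [map_sum, map_smul, smul_eq_mul, LinearMap.trace_id] at htr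
  have h1 : (0:ℂ) = c * (Module.finrank ℂ V : ℂ) := by rw [← htr, ← h0]; rfl
  have hnt : Nontrivial V := by
    have := IsSimpleModule.nontrivial (MonoidAlgebra ℂ G) σ.asModule
    exact this
  have : (Module.finrank ℂ V : ℂ) ≠ 0 := by
    exact_mod_cast (Module.finrank_pos (R := ℂ) (M := V)).ne'
  have hc0 : c = 0 := by
    rcases mul_eq_zero.1 h1.symm with h | h
    · exact h
    · exact absurd h this
  rw [hT, hc0, zero_smul]

lemma isIrrChar_of_irr {G V : Type} [Group G] [Fintype G] [AddCommGroup V] [Module ℂ V]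
    [FiniteDimensional ℂ V] (σ : Representation ℂ G V) [σ.IsIrreducible] :
    IsIrrChar σ.character := by
  refine ⟨FDRep.of σ, ?_, rfl⟩
  have := invertibleOfNonzero (NeZero.ne (Nat.card G : ℂ))
  rw [FDRep.simple_iff_char_is_norm_one]
  have h := Representation.char_orthonormal σ σ
  rw [if_pos ⟨Representation.Equiv.refl σ⟩] at h
  rw [inv_mul_eq_one₀ (NeZero.ne _)] at h
  exact h.symm

lemma simple_smul_zero {G M : Type} [Group G] [Fintype G] [AddCommGroup M] [Module ℂ M]
    [FiniteDimensional ℂ M] [Module (MonoidAlgebra ℂ G) M] [IsScalarTower ℂ (MonoidAlgebra ℂ G) M]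
    [IsSimpleModule (MonoidAlgebra ℂ G) M] (f : G → ℂ)
    (hf : ∀ g h, f (h * g * h⁻¹) = f g)
    (h0 : ∀ χ : G → ℂ, IsIrrChar χ → ∑ g, f g * χ g = 0) (v : M) :
    (∑ g, f g • MonoidAlgebra.of ℂ G g) • v = 0 := by
  let σ : Representation ℂ G M := Representation.ofModule' (k := ℂ) (G := G) M
  have hσ : ∀ r : MonoidAlgebra ℂ G, ∀ x : M, σ.asAlgebraHom r x = r • x := by
    intro r x
    have : σ.asAlgebraHom = Algebra.lsmul ℂ ℂ M :=
      (MonoidAlgebra.lift ℂ (M →ₗ[ℂ] M) G).apply_symm_apply _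
    rw [this]
    rfl
  let e : σ.asModule ≃ₗ[MonoidAlgebra ℂ G] M :=
    { σ.asModuleEquiv.toAddEquiv with
      map_smul' := fun r x => by
        have := hσ r (σ.asModuleEquiv x)
        exact (σ.asModuleEquiv_map_smul r x).trans this }
  have : IsSimpleModule (MonoidAlgebra ℂ G) σ.asModule := IsSimpleModule.congr e
  have : σ.IsIrreducible := (irreducible_iff_isSimpleModule_asModule σ).2 this
  have h := irr_act_zero σ f hf (h0 _ (isIrrChar_of_irr σ))
  have h2 := LinearMap.congr_fun h v
  rw [← hσ, map_sum]
  simpa using h2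

lemma class_complete {G : Type} [Group G] [Fintype G] (f : G → ℂ)
    (hf : ∀ g h, f (h * g * h⁻¹) = f g)
    (h0 : ∀ χ : G → ℂ, IsIrrChar χ → ∑ g, f g * χ g = 0) : f = 0 := by
  let z : (MonoidAlgebra ℂ G) := ∑ g, f g • MonoidAlgebra.of ℂ G g
  have hz : ∀ v : (MonoidAlgebra ℂ G), z * v = 0 := by
    have key : ∀ v ∈ (⊤ : Submodule (MonoidAlgebra ℂ G) (MonoidAlgebra ℂ G)), z • v = 0 := by
      rw [← IsSemisimpleModule.sSup_simples_eq_top (MonoidAlgebra ℂ G) (MonoidAlgebra ℂ G)]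
      intro v hv
      rw [sSup_eq_iSup'] at hv
      refine Submodule.iSup_induction _ (motive := fun v => z • v = 0) hv ?_ (smul_zero _) ?_
      · rintro ⟨m, hm⟩ v hv
        have hm' : IsSimpleModule (MonoidAlgebra ℂ G) m := hm
        have : FiniteDimensional ℂ m :=
          inferInstanceAs (FiniteDimensional ℂ (m.restrictScalars ℂ))
        exact congrArg Subtype.val (simple_smul_zero f hf h0 (⟨v, hv⟩ : m))
      · intro x y hx hy
        rw [smul_add, hx, hy, add_zero]
    exact fun v => key v trivial
  have hz1 : z = 0 := by simpa using hz 1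
  funext g
  have := congrArg (fun t : MonoidAlgebra ℂ G => t.coeff g) hz1
  simpa [z, Finsupp.single_apply] using this

lemma IsIrrChar.conj {G : Type} [Group G] {χ : G → ℂ} (h : IsIrrChar χ) (g k : G) :
    χ (k * g * k⁻¹) = χ g := by
  obtain ⟨V, _, rfl⟩ := h
  exact FDRep.char_conj V g k

lemma IsIrrChar.orth {G : Type} [Group G] [Fintype G] {χ ψ : G → ℂ} (h : IsIrrChar χ)
    (h' : IsIrrChar ψ) : ∑ g, χ g * ψ g⁻¹ = if χ = ψ then (Nat.card G : ℂ) else 0 := by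
  obtain ⟨V, hV, rfl⟩ := h
  obtain ⟨W, hW, rfl⟩ := h'
  have := invertibleOfNonzero (NeZero.ne (Nat.card G : ℂ))
  split_ifs with heq
  · rw [← heq]
    exact (FDRep.simple_iff_char_is_norm_one V).1 hV
  · have h := FDRep.char_orthonormal V W
    rw [if_neg] at h
    · exact (mul_eq_zero.1 h).resolve_left (inv_ne_zero (NeZero.ne _))
    · rintro ⟨i⟩
      exact heq (FDRep.char_iso i)

/-- The type of irreducible characters. -/
abbrev IrrT (G : Type) [Group G] : Type := {χ : G → ℂ // IsIrrChar χ}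

lemma irr_linInd (G : Type) [Group G] [Fintype G] :
    LinearIndependent ℂ (fun χ : IrrT G => χ.1) := by
  rw [linearIndependent_iff']
  intro s c hc ψ hψ
  have h1 : ∑ g, (∑ χ ∈ s, c χ • χ.1) g * ψ.1 g⁻¹ = 0 := by rw [hc]; simp
  simp only [Finset.sum_apply, Pi.smul_apply, smul_eq_mul, Finset.sum_mul] at h1
  rw [Finset.sum_comm] at h1
  simp only [mul_assoc, ← Finset.mul_sum] at h1
  rw [Finset.sum_congr rfl (fun χ _ => by rw [χ.2.orth ψ.2])] at h1
  simp only [mul_ite, mul_zero, ← Subtype.ext_iff] at h1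
  rw [Finset.sum_ite_eq' s ψ, if_pos hψ] at h1
  exact (mul_eq_zero.1 h1).resolve_right (NeZero.ne _)

instance irr_finite (G : Type) [Group G] [Fintype G] : Finite (IrrT G) :=
  (irr_linInd G).finite

instance irr_fintype (G : Type) [Group G] [Fintype G] : Fintype (IrrT G) :=
  Fintype.ofFinite _

lemma column_orth {G : Type} [Group G] [Fintype G] (x y : G) :
    ∑ χ : IrrT G, χ.1 x⁻¹ * χ.1 y = (Nat.card {h : G // h * x * h⁻¹ = y} : ℂ) := by
  have hcard : ∀ y, (Nat.card {h : G // h * x * h⁻¹ = y} : ℂ) =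
      ∑ h : G, if h * x * h⁻¹ = y then 1 else 0 := by
    intro y
    rw [Nat.card_eq_fintype_card, Fintype.card_subtype]
    simp
  let F : G → ℂ := fun y => ∑ χ : IrrT G, χ.1 x⁻¹ * χ.1 y⁻¹ -
    ∑ h : G, if h * x * h⁻¹ = y⁻¹ then 1 else 0
  have hF : F = 0 := by
    apply class_complete
    · intro g k
      simp only [F]
      congr 1
      · refine Finset.sum_congr rfl fun χ _ => ?_
        rw [← χ.2.conj g⁻¹ k]
        simp [mul_assoc]
      · refine Fintype.sum_equiv (Equiv.mulLeft k⁻¹) _ _ fun h => ?_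
        refine if_congr ?_ rfl rfl
        simp only [Equiv.coe_mulLeft]
        constructor
        · intro e
          have : k⁻¹ * h * x * (k⁻¹ * h)⁻¹ = k⁻¹ * (h * x * h⁻¹) * k := by group
          rw [this, e]; group
        · intro e
          have : h * x * h⁻¹ = k * (k⁻¹ * h * x * (k⁻¹ * h)⁻¹) * k⁻¹ := by group
          rw [this, e]; group
    · intro ψ hψ
      simp only [F, sub_mul, Finset.sum_sub_distrib, Finset.sum_mul]
      rw [Finset.sum_comm, Finset.sum_comm (f := fun g h => (if h * x * h⁻¹ = g⁻¹ then (1:ℂ) else 0) * ψ g)]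
      have h1 : ∀ χ : IrrT G, ∑ g, χ.1 x⁻¹ * χ.1 g⁻¹ * ψ g =
          if ⟨ψ, hψ⟩ = χ then χ.1 x⁻¹ * Nat.card G else 0 := by
        intro χ
        have := hψ.orth χ.2
        rw [Finset.sum_congr rfl (fun g _ => show χ.1 x⁻¹ * χ.1 g⁻¹ * ψ g =
          χ.1 x⁻¹ * (ψ g * χ.1 g⁻¹) by ring), ← Finset.mul_sum, this]
        simp [Subtype.ext_iff]
      have h2 : ∀ h : G, ∑ g, (if h * x * h⁻¹ = g⁻¹ then (1:ℂ) else 0) * ψ g = ψ x⁻¹ := by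
        intro h
        rw [Finset.sum_eq_single (h * x⁻¹ * h⁻¹)]
        · rw [if_pos (by group), one_mul, hψ.conj]
        · intro g _ hg
          rw [if_neg, zero_mul]
          intro e
          apply hg
          rw [← inv_inj, ← e]; group
        · simp
      simp only [h1, h2]
      simp [mul_comm]
  have := congrFun hF y⁻¹
  simp only [F, inv_inv, Pi.zero_apply, sub_eq_zero] at this
  rw [this, hcard]

lemma IsIrrChar.integral {G : Type} [Group G] [Fintype G] {χ : G → ℂ} (h : IsIrrChar χ) (g : G) :
    IsIntegral ℤ (χ g) := by
  obtain ⟨V, _, rfl⟩ := h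
  unfold FDRep.character
  rw [Module.End.trace_eq_sum_roots_charpoly_of_splits (IsAlgClosed.splits _)]
  refine IsIntegral.multiset_sum fun r hr => ?_
  have hev : Module.End.HasEigenvalue (V.ρ g) r :=
    (Module.End.hasEigenvalue_iff_isRoot_charpoly _ _).2 (Polynomial.isRoot_of_mem_roots hr)
  obtain ⟨v, hv⟩ := hev.exists_hasEigenvector
  have h1 := hv.pow_apply (Fintype.card G)
  rw [← map_pow, pow_card_eq_one, map_one, Module.End.one_apply] at h1
  have h2 : (1 - r ^ Fintype.card G) • v = 0 := by
    rw [sub_smul, one_smul, ← h1, sub_self]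
  have h3 : r ^ Fintype.card G = 1 := by
    rcases smul_eq_zero.1 h2 with h | h
    · exact (sub_eq_zero.1 h).symm
    · exact absurd h hv.2
  refine IsIntegral.of_pow Fintype.card_pos (n := Fintype.card G) ?_
  rw [h3]
  exact isIntegral_one

/-- Sum over a `p`-group action, modulo `p`. -/
lemma sum_mod_p {S I : Type} [Group S] [MulAction S I] [Fintype I] {p : ℕ} (hp : p.Prime)
    (hS : IsPGroup p S) (F : I → ℂ) (hint : ∀ i, IsIntegral ℤ (F i))
    (hF : ∀ (s : S) i, F (s • i) = F i) (J : Finset I) (hJ : ∀ i, i ∈ J ↔ ∀ s : S, s • i = i) :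
    ∃ r : ℂ, IsIntegral ℤ r ∧
      ∑ i, F i = ∑ i ∈ J, F i + p * r := by
  obtain rfl : J = Finset.univ.filter (fun i => ∀ s : S, s • i = i) := by
    ext i; simp [hJ]
  have := Fact.mk hp
  have key : ∀ c : ℂ, ∃ n : ℤ, ((Finset.univ.filter (fun i => F i = c)).card : ℤ) =
      ((Finset.univ.filter (fun i => ∀ s : S, s • i = i)).filter (fun i => F i = c)).card + p * n := by
    intro c
    let _ : MulAction S {i // F i = c} :=
      { smul := fun s i => ⟨s • i.1, by rw [hF, i.2]⟩
        one_smul := fun i => Subtype.ext (one_smul S i.1)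
        mul_smul := fun s t i => Subtype.ext (mul_smul s t i.1) }
    have h := hS.card_modEq_card_fixedPoints {i // F i = c}
    have h1 : Nat.card {i // F i = c} = (Finset.univ.filter (fun i => F i = c)).card := by
      rw [Nat.card_eq_fintype_card, Fintype.card_subtype]
    have h2 : Nat.card (MulAction.fixedPoints S {i // F i = c}) =
        ((Finset.univ.filter (fun i => ∀ s : S, s • i = i)).filter (fun i => F i = c)).card := by
      rw [Finset.filter_filter, ← Fintype.card_subtype, ← Nat.card_eq_fintype_card]
      refine Nat.card_congr ⟨fun j => ⟨j.1.1, fun s => congrArg Subtype.val (j.2 s), j.1.2⟩,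
        fun j => ⟨⟨j.1, j.2.2⟩, fun s => Subtype.ext (j.2.1 s)⟩, fun _ => rfl, fun _ => rfl⟩
    rw [h1, h2] at h
    obtain ⟨n, hn⟩ := (Nat.modEq_iff_dvd.1 h.symm)
    exact ⟨n, by linarith⟩
  choose n hn using key
  refine ⟨∑ c ∈ Finset.univ.image F, (n c : ℂ) * c, ?_, ?_⟩
  · refine IsIntegral.sum _ fun c hc => ?_
    obtain ⟨i, _, rfl⟩ := Finset.mem_image.1 hc
    exact (isIntegral_algebraMap (R := ℤ) (A := ℂ) (x := n (F i))).mul (hint i)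
  · rw [← Finset.sum_fiberwise_of_maps_to (t := Finset.univ.image F) (g := F)
      (fun i _ => Finset.mem_image_of_mem _ (Finset.mem_univ i)),
      ← Finset.sum_fiberwise_of_maps_to (t := Finset.univ.image F) (g := F)
      (s := Finset.univ.filter (fun i => ∀ s : S, s • i = i))
      (fun i _ => Finset.mem_image_of_mem _ (Finset.mem_univ i)), Finset.mul_sum,
      ← Finset.sum_add_distrib]
    refine Finset.sum_congr rfl fun c _ => ?_
    have e : ∀ s : Finset I, ∑ i ∈ s with F i = c, F i = ((s.filter (fun i => F i = c)).card : ℤ) * c := by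
      intro s
      rw [Finset.sum_congr rfl (fun i hi => (Finset.mem_filter.1 hi).2)]
      simp
    rw [e, e, hn c]
    push_cast
    ring

lemma dvd_of_integral {p n : ℕ} (hp : p.Prime) {r : ℂ} (hr : IsIntegral ℤ r)
    (h : (n : ℂ) = p * r) : p ∣ n := by
  have hp0 : (p : ℂ) ≠ 0 := by exact_mod_cast hp.ne_zero
  have h1 : r = algebraMap ℚ ℂ ((n : ℚ) / p) := by
    simp only [map_div₀, map_natCast]
    field_simp
    rw [h]; ring
  rw [h1, isIntegral_algebraMap_iff (algebraMap ℚ ℂ).injective] at hr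
  obtain ⟨k, hk⟩ := IsIntegrallyClosed.isIntegral_iff.1 hr
  have hp1 : (p : ℚ) ≠ 0 := by exact_mod_cast hp.ne_zero
  have h2 : (n : ℚ) = p * k := by
    simp only [algebraMap_int_eq, eq_intCast] at hk
    rw [hk]; field_simp
  have h3 : (n : ℤ) = p * k := by exact_mod_cast h2
  exact Int.natCast_dvd_natCast.1 ⟨k, h3⟩

lemma IsIrrChar.comp {G : Type} [Group G] [Fintype G] {χ : G → ℂ} (h : IsIrrChar χ)
    (e : MulAut G) : IsIrrChar (fun g => χ (e g)) := by
  obtain ⟨V, hV, rfl⟩ := h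
  refine ⟨FDRep.of (V.ρ.comp e.toMonoidHom), ?_, rfl⟩
  rw [FDRep.simple_iff_char_is_norm_one] at hV ⊢
  rw [← hV]
  refine Fintype.sum_equiv e.toEquiv _ _ fun g => ?_
  have : (e g)⁻¹ = e g⁻¹ := (map_inv e g).symm
  show _ = V.character (e g) * V.character (e g)⁻¹
  rw [this]
  rfl

lemma isConj_map {G : Type} [Group G] (e : MulAut G) {x y : G} (h : IsConj x y) :
    IsConj (e x) (e y) := by
  obtain ⟨c, rfl⟩ := isConj_iff.1 h
  exact isConj_iff.2 ⟨e c, by simp⟩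

/-- The action of `P` on irreducible characters. -/
@[reducible] def irrAction {G P : Type} [Group G] [Fintype G] [Group P] (φ : P →* MulAut G) :
    MulAction P (IrrT G) where
  smul a χ := ⟨fun g => χ.1 (φ a⁻¹ g), χ.2.comp (φ a⁻¹)⟩
  one_smul χ := Subtype.ext (funext fun g => show χ.1 (φ 1⁻¹ g) = χ.1 g by simp)
  mul_smul a b χ := Subtype.ext (funext fun g =>
    show χ.1 (φ (a * b)⁻¹ g) = χ.1 (φ b⁻¹ (φ a⁻¹ g)) by simp)

lemma IsIrrChar.isConj {G : Type} [Group G] {χ : G → ℂ} (h : IsIrrChar χ) {x y : G}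
    (e : IsConj x y) : χ x = χ y := by
  obtain ⟨c, rfl⟩ := isConj_iff.1 e
  exact (h.conj x c).symm

/-- Stabilizer of the conjugacy class of `x`. -/
def classStab {G P : Type} [Group G] [Group P] (φ : P →* MulAut G) (x : G) : Subgroup P where
  carrier := {a | IsConj (φ a x) x}
  one_mem' := by
    show IsConj (φ 1 x) x
    rw [map_one]
    exact IsConj.refl x
  mul_mem' {a b} ha hb := by
    have := isConj_map (φ a) (hb : IsConj (φ b x) x)
    show IsConj (φ (a * b) x) x
    rw [map_mul, MulAut.mul_apply]
    exact IsConj.trans this ha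
  inv_mem' {a} ha := by
    have := isConj_map (φ a⁻¹) (ha : IsConj (φ a x) x)
    simp only [← MulAut.mul_apply, ← map_mul,
      inv_mul_cancel, map_one, MulAut.one_apply] at this
    exact this.symm

lemma card_centr_dvd {G : Type} [Group G] [Fintype G] (x : G) :
    Nat.card {h : G // h * x * h⁻¹ = x} ∣ Nat.card G := by
  have := Subgroup.card_subgroup_dvd_card (Subgroup.centralizer {x})
  convert this using 1
  refine Nat.card_congr (Equiv.subtypeEquivRight fun h => ?_)
  rw [Subgroup.mem_centralizer_singleton_iff, mul_inv_eq_iff_eq_mul]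

lemma classStab_top {G P : Type} [Group G] [Fintype G] [Group P] [Fintype P] (p : ℕ)
    (hp : p.Prime) (hPp : IsPGroup p P) (φ : P →* MulAut G)
    (hcop : ¬ p ∣ Nat.card G) (Q : Subgroup P)
    (hIrr : ∀ χ : G → ℂ, IsIrrChar χ → (∀ a ∈ Q, ∀ g : G, χ (φ a g) = χ g) →
      ∀ a : P, ∀ g : G, χ (φ a g) = χ g) (x : G) (hx : ∀ a ∈ Q, φ a x = x) :
    classStab φ x = ⊤ := by
  have := Fact.mk hp
  set T := classStab φ x with hTdef
  have hQT : Q ≤ T := fun a ha => show IsConj (φ a x) x by rw [hx a ha]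
  by_contra hT
  have := hPp.isNilpotent
  obtain ⟨a, haN, haT⟩ := SetLike.exists_of_lt
    (Group.normalizerCondition_of_isNilpotent (G := P) T (lt_top_iff_ne_top.2 hT))
  let _ := irrAction φ
  have hsmul : ∀ (t : T) (χ : IrrT G) g, (t • χ).1 g = χ.1 (φ (t : P)⁻¹ g) := fun _ _ _ => rfl
  have hxT : ∀ t ∈ T, IsConj (φ t x) x := fun t ht => ht
  have hyT : ∀ t ∈ T, IsConj (φ t (φ a x)) (φ a x) := by
    intro t ht
    have h1 : a⁻¹ * t * a ∈ T := (Subgroup.mem_normalizer_iff''.1 haN t).1 ht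
    have := isConj_map (φ a) (hxT _ h1)
    simp only [← MulAut.mul_apply, ← map_mul] at this ⊢
    convert this using 3
    group
  have hxT' : ∀ t ∈ T, IsConj (φ t x⁻¹) x⁻¹ := by
    intro t ht
    obtain ⟨c, hc⟩ := isConj_iff.1 (hxT t ht)
    refine isConj_iff.2 ⟨c, ?_⟩
    rw [map_inv]
    conv_rhs => rw [← hc]
    group
  have hTp : IsPGroup p T := hPp.to_subgroup T
  obtain ⟨J, hJ⟩ : ∃ J : Finset (IrrT G), ∀ χ, χ ∈ J ↔ ∀ t : T, t • χ = χ :=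
    ⟨Finset.univ.filter (fun χ => ∀ t : T, t • χ = χ), by simp⟩
  obtain ⟨r, hr, h1⟩ := sum_mod_p hp hTp (fun χ : IrrT G => χ.1 x⁻¹ * χ.1 x)
    (fun χ => (χ.2.integral _).mul (χ.2.integral _)) (by
      intro t χ
      simp only [hsmul]
      rw [χ.2.isConj (hxT _ (inv_mem t.2)), χ.2.isConj (hxT' _ (inv_mem t.2))]) J hJ
  obtain ⟨r', hr', h2⟩ := sum_mod_p hp hTp (fun χ : IrrT G => χ.1 x⁻¹ * χ.1 (φ a x))
    (fun χ => (χ.2.integral _).mul (χ.2.integral _)) (by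
      intro t χ
      simp only [hsmul]
      rw [χ.2.isConj (hyT _ (inv_mem t.2)), χ.2.isConj (hxT' _ (inv_mem t.2))]) J hJ
  have h3 : ∑ χ ∈ J, χ.1 x⁻¹ * χ.1 (φ a x) =
      ∑ χ ∈ J, χ.1 x⁻¹ * χ.1 x := by
    refine Finset.sum_congr rfl fun χ hχ => ?_
    have hfix := (hJ χ).1 hχ
    rw [hIrr χ.1 χ.2 _ a x]
    intro b hb g
    have := hsmul (⟨b, hQT hb⟩⁻¹) χ g
    rw [hfix] at this
    simpa using this.symm
  rw [column_orth] at h1 h2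
  have h4 : Nat.card {h : G // h * x * h⁻¹ = φ a x} = 0 := by
    rw [Nat.card_eq_zero]
    left
    exact ⟨fun h => haT (show IsConj (φ a x) x from (isConj_iff.2 ⟨h.1, h.2⟩).symm)⟩
  rw [h4, h3] at h2
  refine hcop ((dvd_of_integral hp (hr.sub hr') ?_).trans (card_centr_dvd x))
  rw [h1]
  push_cast at h2
  linear_combination -h2

/-- Jordan: a subgroup of a finite group meeting every conjugacy class is everything. -/
lemma jordan_cover {C : Type} [Group C] [Finite C] (D : Subgroup C)
    (h : ∀ x : C, ∃ c : C, c * x * c⁻¹ ∈ D) : D = ⊤ := by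
  have := Fintype.ofFinite C
  have hB := MulAction.sum_card_fixedBy_eq_card_orbits_mul_card_group C (C ⧸ D)
  have h1 : Fintype.card (Quotient (MulAction.orbitRel C (C ⧸ D))) = 1 := by
    rw [Fintype.card_eq_one_iff_nonempty_unique]
    have := (MulAction.pretransitive_iff_unique_quotient_of_nonempty C (C ⧸ D)).1 inferInstance
    exact this
  rw [h1, one_mul] at hB
  have hge : ∀ g : C, 1 ≤ Fintype.card (MulAction.fixedBy (C ⧸ D) g) := by
    intro g
    obtain ⟨c, hc⟩ := h g
    refine Fintype.card_pos_iff.2 ⟨⟨((c⁻¹ : C) : C ⧸ D), ?_⟩⟩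
    rw [MulAction.mem_fixedBy, MulAction.Quotient.smul_coe, eq_comm, QuotientGroup.eq]
    simpa [mul_assoc] using hc
  have hall : ∀ g ∈ (Finset.univ : Finset C), 1 = Fintype.card (MulAction.fixedBy (C ⧸ D) g) := by
    have hs : ∑ g : C, 1 = ∑ g : C, Fintype.card (MulAction.fixedBy (C ⧸ D) g) := by
      rw [hB]; simp
    exact (Finset.sum_eq_sum_iff_of_le (fun g _ => hge g)).1 hs
  have h2 := hall 1 (Finset.mem_univ _)
  rw [← Nat.card_eq_fintype_card] at h2
  rw [← Subgroup.index_eq_one, Subgroup.index, h2]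
  refine Nat.card_congr (Equiv.symm ?_)
  exact Equiv.subtypeUnivEquiv fun x => by simp

/-- The subgroup of fixed points. -/
def fixSub {G P : Type} [Group G] [Group P] (φ : P →* MulAut G) (Q : Subgroup P) : Subgroup G where
  carrier := {g | ∀ a ∈ Q, φ a g = g}
  one_mem' := by simp
  mul_mem' {x y} hx hy a ha := by rw [map_mul, hx a ha, hy a ha]
  inv_mem' {x} hx a ha := by rw [map_inv, hx a ha]

end Helpers

/-- If a `p`-group `P` acts coprimely on `G` via `φ`, `Q ≤ P`, and the `P`-invariant
irreducible characters of `G` coincide with the `Q`-invariant ones, then `C_G(P) = C_G(Q)`. -/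
theorem stmt_4 {G P : Type} [Group G] [Fintype G] [Group P] [Fintype P] (p : ℕ)
    (hp : p.Prime) (hPp : IsPGroup p P) (φ : P →* MulAut G)
    (hcop : ¬ p ∣ Nat.card G) (Q : Subgroup P)
    (hIrr : {χ : G → ℂ | IsIrrChar χ ∧ ∀ a : P, ∀ g : G, χ (φ a g) = χ g} =
            {χ : G → ℂ | IsIrrChar χ ∧ ∀ a ∈ Q, ∀ g : G, χ (φ a g) = χ g}) :
    {g : G | ∀ a : P, φ a g = g} = {g : G | ∀ a ∈ Q, φ a g = g} := by
  have hp' := Fact.mk hp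
  have hIrr' : ∀ χ : G → ℂ, IsIrrChar χ → (∀ a ∈ Q, ∀ g : G, χ (φ a g) = χ g) →
      ∀ a : P, ∀ g : G, χ (φ a g) = χ g := by
    intro χ h1 h2
    have : χ ∈ {χ : G → ℂ | IsIrrChar χ ∧ ∀ a : P, ∀ g : G, χ (φ a g) = χ g} := by
      rw [hIrr]; exact ⟨h1, h2⟩
    exact this.2
  have key : (fixSub φ ⊤).subgroupOf (fixSub φ Q) = ⊤ := by
    apply jordan_cover
    rintro ⟨x, hx⟩
    have htop := classStab_top p hp hPp φ hcop Q hIrr' x hx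
    have hconj : ∀ a, IsConj (φ a x) x := fun a => by
      have : a ∈ classStab φ x := htop ▸ Subgroup.mem_top a
      exact this
    -- a `P`-fixed point in the class of `x`
    let _ : MulAction P {y : G // IsConj x y} :=
      { smul := fun a y => ⟨φ a y.1, (hconj a).symm.trans (isConj_map (φ a) y.2)⟩
        one_smul := fun y => Subtype.ext (by show φ 1 y.1 = y.1; simp)
        mul_smul := fun a b y => Subtype.ext (by show φ (a * b) y.1 = φ a (φ b y.1); simp) }
    have hc1 : ¬ p ∣ Nat.card {y : G // IsConj x y} := by
      intro hd
      apply hcop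
      refine hd.trans ?_
      have h1 : Nat.card {y : G // IsConj x y} = Nat.card (MulAction.orbit (ConjAct G) x) := by
        refine Nat.card_congr (Equiv.subtypeEquivRight fun y => ?_)
        rw [ConjAct.mem_orbit_conjAct, isConj_comm]
      rw [h1, Nat.card_congr (MulAction.orbitEquivQuotientStabilizer (ConjAct G) x)]
      exact Subgroup.index_dvd_card (MulAction.stabilizer (ConjAct G) x)
    obtain ⟨⟨y, hxy⟩, hy⟩ := hPp.nonempty_fixed_point_of_prime_not_dvd_card _ hc1
    have hyP : ∀ a, φ a y = y := fun a => congrArg Subtype.val (hy a)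
    -- a `Q`-fixed conjugating element
    let _ : MulAction Q {h : G // h * x * h⁻¹ = y} :=
      { smul := fun a h => ⟨φ a h.1, by
          have := congrArg (φ a) h.2
          rw [hyP, map_mul, map_mul, map_inv, hx _ a.2] at this
          exact this⟩
        one_smul := fun y => Subtype.ext (by show φ 1 y.1 = y.1; simp)
        mul_smul := fun a b y => Subtype.ext (by
          show φ ((a : P) * b) y.1 = φ a (φ b y.1); simp) }
    have hc2 : ¬ p ∣ Nat.card {h : G // h * x * h⁻¹ = y} := by
      intro hd
      apply hcop
      refine Dvd.dvd.trans ?_ (card_centr_dvd x)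
      suffices hs : Nat.card {h : G // h * x * h⁻¹ = x} = Nat.card {h : G // h * x * h⁻¹ = y} by
        rw [hs]; exact hd
      obtain ⟨c, hc⟩ := isConj_iff.1 hxy
      refine Nat.card_congr ((Equiv.mulLeft c).subtypeEquiv fun h => ?_)
      have e : c * h * x * (c * h)⁻¹ = c * (h * x * h⁻¹) * c⁻¹ := by group
      rw [← hc, Equiv.coe_mulLeft, e, mul_left_inj, mul_right_inj]
    obtain ⟨⟨h, hh⟩, hfix⟩ := (hPp.to_subgroup Q).nonempty_fixed_point_of_prime_not_dvd_card _ hc2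
    refine ⟨⟨h, fun a ha => congrArg Subtype.val (hfix ⟨a, ha⟩)⟩, ?_⟩
    rw [Subgroup.mem_subgroupOf]
    show h * x * h⁻¹ ∈ fixSub φ ⊤
    rw [hh]
    exact fun a _ => hyP a
  rw [Subgroup.subgroupOf_eq_top] at key
  ext g
  exact ⟨fun h a _ => h a, fun h a => key h a trivial⟩
end
end

section
/- Let A act by automorphisms on a finite group G, let N ⊴ G be A-invariant with gcd(|G:N|, |A|) = 1 and with A acting trivially on G/N (i.e., C_{G/N}(A) = G/N). Let χ ∈ Irr(G) and θ ∈ Irr(N) with [χ|_N, θ] ≠ 0. Then χ is A-invariant if and only if θ is A-invariant. -/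
open scoped BigOperators Classical

noncomputable section

section WolfAux

open Representation

theorem W_trace_compl {V : Type} [AddCommGroup V] [Module ℂ V] [FiniteDimensional ℂ V]
    (p q : Submodule ℂ V) (h : IsCompl p q) (f : V →ₗ[ℂ] V) (hp : ∀ v ∈ p, f v ∈ p)
    (hq : ∀ v ∈ q, f v ∈ q) :
    LinearMap.trace ℂ V f = LinearMap.trace ℂ p (f.restrict hp) +
      LinearMap.trace ℂ q (f.restrict hq) := by
  rw [← LinearMap.trace_prodMap', ← LinearMap.trace_conj' _ (Submodule.prodEquivOfIsCompl p q h)]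
  congr 1
  apply LinearMap.ext
  intro v
  obtain ⟨w, rfl⟩ := (Submodule.prodEquivOfIsCompl p q h).surjective v
  simp [LinearEquiv.conj_apply]

theorem W_isSemisimple {G V : Type} [Group G] [Finite G] [AddCommGroup V] [Module ℂ V]
    (ρ : Representation ℂ G V) : IsSemisimpleRepresentation ρ := by
  rw [isSemisimpleRepresentation_iff_isSemisimpleModule_asModule]
  have : NeZero (Nat.card G : ℂ) := ⟨by exact_mod_cast Nat.card_pos.ne'⟩
  infer_instance

theorem W_irr_decomp {H : Type} [Group H] [Finite H] (P : (H → ℂ) → Prop) (h0 : P 0)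
    (hadd : ∀ f g, P f → P g → P (f + g)) (n : ℕ) :
    ∀ (V : Type) [AddCommGroup V] [Module ℂ V] [FiniteDimensional ℂ V]
    (ρ : Representation ℂ H V), Module.finrank ℂ V = n →
    (∀ (U : Type) [AddCommGroup U] [Module ℂ U] [FiniteDimensional ℂ U]
      (τ : Representation ℂ H U) (_ : IsIrreducible τ) (ι : U →ₗ[ℂ] V),
      Function.Injective ι → (∀ h u, ι (τ h u) = ρ h (ι u)) → P τ.character) →
    P ρ.character := by
  induction n using Nat.strong_induction_on with
  | _ n ih =>
  intro V _ _ _ ρ hn hU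
  by_cases hirr : IsIrreducible ρ
  · exact hU V ρ hirr LinearMap.id (fun _ _ h => h) (fun _ _ => rfl)
  by_cases hV : Subsingleton V
  · convert h0
    ext h
    simp only [Representation.character, Pi.zero_apply]
    rw [Subsingleton.elim (ρ h) 0, map_zero]
  rw [not_subsingleton_iff_nontrivial] at hV
  have : ∃ p : Subrepresentation ρ, p ≠ ⊥ ∧ p ≠ ⊤ := by
    by_contra! hc
    apply hirr
    have : Nontrivial (Subrepresentation ρ) := ⟨⟨⊥, ⊤, fun h => by
      have := congrArg Subrepresentation.toSubmodule h
      exact bot_ne_top (α := Submodule ℂ V) this⟩⟩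
    exact ⟨fun p => or_iff_not_imp_left.2 (hc p)⟩
  obtain ⟨p, hp0, hp1⟩ := this
  have := W_isSemisimple ρ
  obtain ⟨q, hq⟩ := exists_isCompl p
  have hc : IsCompl p.toSubmodule q.toSubmodule := by
    constructor
    · rw [disjoint_iff]
      exact congrArg Subrepresentation.toSubmodule hq.1.eq_bot
    · rw [codisjoint_iff]
      exact congrArg Subrepresentation.toSubmodule hq.2.eq_top
  have hp0' : p.toSubmodule ≠ ⊥ := fun h => hp0 (Subrepresentation.toSubmodule_injective h)
  have hp1' : p.toSubmodule ≠ ⊤ := fun h => hp1 (Subrepresentation.toSubmodule_injective h)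
  have hs := Submodule.finrank_add_eq_of_isCompl hc
  have h1 : 0 < Module.finrank ℂ p.toSubmodule := by
    rw [Nat.pos_iff_ne_zero]; intro h; exact hp0' (Submodule.finrank_eq_zero.1 h)
  have h2 := Submodule.finrank_lt hp1'
  have e : ρ.character = p.toRepresentation.character + q.toRepresentation.character := by
    ext h
    exact W_trace_compl _ _ hc (ρ h) (fun v hv => p.apply_mem_toSubmodule h hv)
      (fun v hv => q.apply_mem_toSubmodule h hv)
  rw [e]
  apply hadd
  · refine ih _ (by omega) _ _ rfl ?_
    intro U _ _ _ τ hτ ι hι hc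
    refine hU U τ hτ (p.toSubmodule.subtype ∘ₗ ι) (Subtype.val_injective.comp hι) ?_
    intro h u
    simp only [LinearMap.comp_apply, hc]; rfl
  · refine ih _ (by omega) _ _ rfl ?_
    intro U _ _ _ τ hτ ι hι hc
    refine hU U τ hτ (q.toSubmodule.subtype ∘ₗ ι) (Subtype.val_injective.comp hι) ?_
    intro h u
    simp only [LinearMap.comp_apply, hc]; rfl

theorem W_irr_comp {H K U : Type} [Group H] [Group K] [AddCommGroup U] [Module ℂ U]
    (τ : Representation ℂ H U) (hτ : IsIrreducible τ) (b : K →* H) (hb : Function.Surjective b) :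
    IsIrreducible (V := U) (MonoidHom.comp τ b) := by
  have hnt := hτ.toNontrivial
  refine { exists_pair_ne := ?_, eq_bot_or_eq_top := ?_ }
  · refine ⟨⊥, ⊤, fun h => bot_ne_top (α := Subrepresentation τ) ?_⟩
    have h' := congrArg Subrepresentation.toSubmodule h
    exact Subrepresentation.toSubmodule_injective h'
  · intro p
    let p' : Subrepresentation τ := ⟨p.toSubmodule, fun g v hv => by
      obtain ⟨k, rfl⟩ := hb g
      exact p.apply_mem_toSubmodule k hv⟩
    rcases hτ.eq_bot_or_eq_top p' with h | h
    · left
      have h' := congrArg Subrepresentation.toSubmodule h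
      exact Subrepresentation.toSubmodule_injective h'
    · right
      have h' := congrArg Subrepresentation.toSubmodule h
      exact Subrepresentation.toSubmodule_injective h'

theorem W_sum_inv {G : Type} [Group G] [Fintype G] (f : G → ℂ) : ∑ g, f g⁻¹ = ∑ g, f g :=
  Equiv.sum_comp (Equiv.inv G) f

/-- nonzero hom from nonzero inner product -/
theorem W_hom_of_sum {G V W : Type} [Group G] [Fintype G] [AddCommGroup V] [Module ℂ V]
    [FiniteDimensional ℂ V] [AddCommGroup W] [Module ℂ W] [FiniteDimensional ℂ W]
    (ρ : Representation ℂ G V) (σ : Representation ℂ G W)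
    (h : ∑ g : G, σ.character g * ρ.character g⁻¹ ≠ 0) :
    ∃ f : V →ₗ[ℂ] W, f ≠ 0 ∧ ∀ g v, f (ρ g v) = σ g (f v) := by
  have hc : (Nat.card G : ℂ) ≠ 0 := by exact_mod_cast Nat.card_pos.ne'
  have := invertibleOfNonzero hc
  have key := card_inv_mul_sum_char_mul_char_eq_finrank ρ σ
  have : Module.finrank ℂ (IntertwiningMap ρ σ) ≠ 0 := by
    intro h0
    rw [h0] at key
    simp [h] at key
  have hnt : Nontrivial (IntertwiningMap ρ σ) :=
    Module.nontrivial_of_finrank_pos (R := ℂ) (Nat.pos_of_ne_zero this)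
  obtain ⟨f, hf⟩ := exists_ne (0 : IntertwiningMap ρ σ)
  refine ⟨f.toLinearMap, fun h => hf (IntertwiningMap.ext h), f.isIntertwining⟩

theorem W_sum_of_hom {G V W : Type} [Group G] [Fintype G] [AddCommGroup V] [Module ℂ V]
    [FiniteDimensional ℂ V] [AddCommGroup W] [Module ℂ W] [FiniteDimensional ℂ W]
    (ρ : Representation ℂ G V) (σ : Representation ℂ G W)
    (f : V →ₗ[ℂ] W) (hf : f ≠ 0) (hfi : ∀ g v, f (ρ g v) = σ g (f v)) :
    ∑ g : G, σ.character g * ρ.character g⁻¹ ≠ 0 := by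
  have hc : (Nat.card G : ℂ) ≠ 0 := by exact_mod_cast Nat.card_pos.ne'
  have := invertibleOfNonzero hc
  have key := card_inv_mul_sum_char_mul_char_eq_finrank ρ σ
  intro h
  rw [h, mul_zero] at key
  have h0 : Module.finrank ℂ (IntertwiningMap ρ σ) = 0 := by exact_mod_cast key.symm
  have : FiniteDimensional ℂ (IntertwiningMap ρ σ) :=
    FiniteDimensional.of_injective
      ({ toFun := fun f => f.toLinearMap, map_add' := fun _ _ => rfl, map_smul' := fun _ _ => rfl } :
        IntertwiningMap ρ σ →ₗ[ℂ] (V →ₗ[ℂ] W)) (IntertwiningMap.toLinearMap_injective ρ σ)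
  have := Module.finrank_zero_iff.1 h0
  let F : IntertwiningMap ρ σ := ⟨f, fun g => by ext v; exact hfi g v⟩
  have : F = 0 := Subsingleton.elim _ _
  exact hf (congrArg IntertwiningMap.toLinearMap this)

theorem W_char_inv {G V : Type} [Group G] [Finite G] [AddCommGroup V] [Module ℂ V]
    [FiniteDimensional ℂ V] (ρ : Representation ℂ G V) (g : G) :
    ρ.character g⁻¹ = (starRingEnd ℂ) (ρ.character g) := by
  let ρ' : Representation ℂ (Subgroup.zpowers g) V := MonoidHom.comp ρ (Subgroup.zpowers g).subtype
  let z : Subgroup.zpowers g := ⟨g, Subgroup.mem_zpowers g⟩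
  change ρ'.character z⁻¹ = (starRingEnd ℂ) (ρ'.character z)
  refine W_irr_decomp (H := Subgroup.zpowers g)
    (fun f => f z⁻¹ = (starRingEnd ℂ) (f z)) (by simp) ?_ _ V ρ' rfl ?_
  · intro f h hf hh
    simp [hf, hh]
  · intro U _ _ _ τ hτ _ _ _
    have h1 := IsIrreducible.finrank_eq_one_of_isMulCommutative τ
    obtain ⟨c, hc⟩ : ∃ c : ℂ, τ z = c • LinearMap.id := by
      obtain ⟨v, hv, hs⟩ := finrank_eq_one_iff'.1 h1
      obtain ⟨c, hc⟩ := hs (τ z v)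
      refine ⟨c, LinearMap.ext fun w => ?_⟩
      obtain ⟨d, rfl⟩ := hs w
      rw [map_smul, ← hc, LinearMap.smul_apply, LinearMap.id_apply, smul_comm]
    have : Nontrivial U := Module.nontrivial_of_finrank_pos (R := ℂ) (by omega)
    have hpow : ∀ n : ℕ, (τ z) ^ n = (c ^ n) • LinearMap.id := by
      intro n
      induction n with
      | zero => simp; rfl
      | succ n ih => rw [pow_succ, ih, hc]; ext; simp [pow_succ, mul_smul]; rw [smul_comm]
    have hn := hpow (orderOf z)
    rw [← map_pow, pow_orderOf_eq_one, map_one] at hn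
    obtain ⟨v, hv⟩ := exists_ne (0 : U)
    have hcn : c ^ orderOf z = 1 := by
      have := LinearMap.congr_fun hn v
      simp at this
      have h2 : (1 - c ^ orderOf z) • v = 0 := by rw [sub_smul, ← this]; simp
      rcases smul_eq_zero.1 h2 with h | h
      · exact (sub_eq_zero.1 h).symm
      · exact absurd h hv
    have hnorm : ‖c‖ = 1 := Complex.norm_eq_one_of_pow_eq_one hcn (orderOf_pos z).ne'
    have hc0 : c ≠ 0 := by rintro rfl; simp at hnorm
    have hinv : τ z⁻¹ = c⁻¹ • LinearMap.id := by
      have : τ z⁻¹ * τ z = 1 := by rw [← map_mul]; simp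
      rw [hc] at this
      ext w
      have := LinearMap.congr_fun this w
      simp at this
      rw [LinearMap.smul_apply, LinearMap.id_apply]
      conv_rhs => rw [← this]
      rw [smul_smul, inv_mul_cancel₀ hc0, one_smul]
    simp only [Representation.character, hinv, hc, map_smul]
    simp [LinearMap.trace_id, h1, Complex.inv_eq_conj hnorm]

theorem W_simple_irr {G : Type} [Group G] (V : FDRep ℂ G) (hV : CategoryTheory.Simple V) :
    IsIrreducible (V := V) V.ρ := by
  have hnt : Nontrivial V := by
    by_contra hc
    rw [not_nontrivial_iff_subsingleton] at hc
    apply CategoryTheory.id_nonzero V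
    apply (CategoryTheory.forget₂ (FDRep ℂ G) (FGModuleCat ℂ)).map_injective
    ext v
    exact Subsingleton.elim (α := V) _ _
  refine { exists_pair_ne := ?_, eq_bot_or_eq_top := ?_ }
  · refine ⟨⊥, ⊤, fun h => ?_⟩
    have := congrArg Subrepresentation.toSubmodule h
    exact bot_ne_top (α := Submodule ℂ V) this
  · intro p
    let F : FDRep.of p.toRepresentation ⟶ V :=
      ⟨CategoryTheory.InducedCategory.homMk (ModuleCat.ofHom p.toSubmodule.subtype), fun g => by
        ext v; rfl⟩
    have hm : CategoryTheory.Mono F := by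
      apply (CategoryTheory.forget (FDRep ℂ G)).mono_of_mono_map
      rw [CategoryTheory.mono_iff_injective]
      exact Subtype.val_injective
    by_cases hF : F = 0
    · left
      apply Subrepresentation.toSubmodule_injective
      change p.toSubmodule = ⊥
      rw [eq_bot_iff]
      intro v hv
      have := congrArg (fun f : FDRep.of p.toRepresentation ⟶ V =>
        (CategoryTheory.forget (FDRep ℂ G)).map f (⟨v, hv⟩ : p.toSubmodule)) hF
      exact this
    · right
      have hi := CategoryTheory.isIso_of_mono_of_nonzero hF
      apply Subrepresentation.toSubmodule_injective
      change p.toSubmodule = ⊤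
      rw [eq_top_iff]
      intro v _
      have hs : CategoryTheory.IsIso ((CategoryTheory.forget (FDRep ℂ G)).map F) := inferInstance
      rw [CategoryTheory.isIso_iff_bijective] at hs
      obtain ⟨w, hw⟩ := hs.2 v
      have : (w : p.toSubmodule).1 = v := hw
      rw [← this]
      exact w.2

theorem W_clifford {G V W W' : Type} [Group G] [AddCommGroup V] [Module ℂ V]
    [AddCommGroup W] [Module ℂ W] [AddCommGroup W'] [Module ℂ W'] (N : Subgroup G) [N.Normal]
    (ρ : Representation ℂ G V) (hρ : IsIrreducible ρ)
    (σ : Representation ℂ N W) (hσ : IsIrreducible σ)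
    (σ' : Representation ℂ N W') (hσ' : IsIrreducible σ')
    (f : W →ₗ[ℂ] V) (hf : f ≠ 0) (hfi : ∀ (n : N) v, f (σ n v) = ρ n (f v))
    (f' : V →ₗ[ℂ] W') (hf' : f' ≠ 0) (hfi' : ∀ (n : N) v, f' (ρ n v) = σ' n (f' v)) :
    ∃ x : G, ∀ n : N, σ'.character n = σ.character (MulAut.conjNormal x n) := by
  have hx : ∃ x : G, f' ∘ₗ ρ x ∘ₗ f ≠ 0 := by
    by_contra! hc
    let Z : Subrepresentation ρ :=
      ⟨⨅ x : G, LinearMap.ker (f' ∘ₗ ρ x), fun g v hv => by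
        simp only [Submodule.mem_iInf, LinearMap.mem_ker, LinearMap.comp_apply] at hv ⊢
        intro x
        have := hv (x * g)
        simpa using this⟩
    have hZ : ∀ v, v ∈ Z.toSubmodule ↔ ∀ x, f' (ρ x v) = 0 := by
      intro v; simp [Z]
    rcases hρ.eq_bot_or_eq_top Z with h | h
    · apply hf
      ext w
      have : f w ∈ Z.toSubmodule := (hZ _).2 fun x => LinearMap.congr_fun (hc x) w
      rw [h] at this
      exact this
    · apply hf'
      ext v
      have : v ∈ Z.toSubmodule := by rw [h]; exact Submodule.mem_top
      simpa using (hZ v).1 this 1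
  obtain ⟨x, hx⟩ := hx
  set B := f' ∘ₗ ρ x ∘ₗ f with hB
  have hBi : ∀ (n : N) w, B (σ n w) = σ' (MulAut.conjNormal x n) (B w) := by
    intro n w
    simp only [hB, LinearMap.comp_apply, hfi, ← hfi']
    rw [← Module.End.mul_apply, ← Module.End.mul_apply, ← map_mul, ← map_mul]
    simp
  have hBi' : ∀ (n : N) w, B (σ (MulAut.conjNormal x⁻¹ n) w) = σ' n (B w) := by
    intro n w
    rw [hBi, ← MulAut.mul_apply, ← map_mul]; simp
  have hinj : Function.Injective B := by
    let F : IntertwiningMap σ (MonoidHom.comp σ' (MulAut.conjNormal x : MulAut N).toMonoidHom) :=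
      ⟨B, fun n => by ext w; exact hBi n w⟩
    rcases IsIrreducible.injective_or_eq_zero F with h | h
    · exact h
    · exact absurd (congrArg IntertwiningMap.toLinearMap h) hx
  have hsurj : Function.Surjective B := by
    let F : IntertwiningMap (MonoidHom.comp σ (MulAut.conjNormal x⁻¹ : MulAut N).toMonoidHom) σ' :=
      ⟨B, fun n => by ext w; exact hBi' n w⟩
    rcases IsIrreducible.surjective_or_eq_zero F with h | h
    · exact h
    · exact absurd (congrArg IntertwiningMap.toLinearMap h) hx
  refine ⟨x⁻¹, fun n => ?_⟩
  let e := LinearEquiv.ofBijective B ⟨hinj, hsurj⟩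
  have : σ' n = e.conj (σ (MulAut.conjNormal x⁻¹ n)) := by
    ext w
    obtain ⟨w, rfl⟩ := e.surjective w
    simp only [LinearEquiv.conj_apply, LinearMap.comp_apply, LinearEquiv.coe_coe,
      LinearEquiv.symm_apply_apply]
    exact (hBi' n w).symm
  simp only [Representation.character, this, LinearMap.trace_conj']

theorem W_cyc {H N U : Type} [Group H] [Group N] [Fintype N] [AddCommGroup U] [Module ℂ U]
    [FiniteDimensional ℂ U] (j : N →* H) (hnorm : j.range.Normal) (a : H →* H)
    (τ : Representation ℂ H U) (hτ : IsIrreducible τ) (g : H) (k m : ℕ)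
    (hk : ∀ h, a^[k] h = h) (htriv : ∀ h, ∃ n, a h = h * j n)
    (hgen : ∀ K : Subgroup H, j.range ≤ K → g ∈ K → K = ⊤)
    (hm : g ^ m ∈ j.range) (hcop : Nat.Coprime m k)
    (hχ : ∀ n, τ.character (a (j n)) = τ.character (j n)) :
    τ.character (a g) = τ.character g := by
  have hUnt : Nontrivial U := by
    by_contra hc
    rw [not_nontrivial_iff_subsingleton] at hc
    have := hτ.toNontrivial
    apply bot_ne_top (α := Subrepresentation τ)
    apply Subrepresentation.toSubmodule_injective
    exact Subsingleton.elim _ _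
  let S : Submodule ℂ (Module.End ℂ U) :=
    { carrier := {T | ∀ n, T * τ (j n) = τ (a (j n)) * T}
      add_mem' := fun {x y} hx hy n => by rw [add_mul, mul_add, hx n, hy n]
      zero_mem' := fun n => by simp
      smul_mem' := fun c x hx n => by rw [smul_mul_assoc, hx n, mul_smul_comm] }
  have hSmem : ∀ T, T ∈ S ↔ ∀ n, T * τ (j n) = τ (a (j n)) * T := fun T => Iff.rfl
  have hSnt : Nontrivial S := by
    let τ1 : Representation ℂ N U := MonoidHom.comp τ j
    let τ2 : Representation ℂ N U := MonoidHom.comp τ (a.comp j)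
    have h1 : ∑ n : N, τ1.character n * τ1.character n⁻¹ ≠ 0 :=
      W_sum_of_hom τ1 τ1 LinearMap.id (by
        intro h
        obtain ⟨v, hv⟩ := exists_ne (0 : U)
        exact hv (LinearMap.congr_fun h v)) (fun _ _ => rfl)
    have h2 : ∀ n, τ2.character n = τ1.character n := hχ
    obtain ⟨T, hT, hTi⟩ := W_hom_of_sum τ1 τ2 (by simpa only [h2] using h1)
    refine ⟨⟨⟨T, fun n => ?_⟩, 0, fun h => hT (congrArg Subtype.val h)⟩⟩
    ext v
    exact hTi n v
  let D : Module.End ℂ (Module.End ℂ U) :=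
    LinearMap.mulLeft ℂ (τ (a g)) * LinearMap.mulRight ℂ (τ g⁻¹)
  have hDa : ∀ T, D T = τ (a g) * (T * τ g⁻¹) := fun T => rfl
  have hDS : ∀ T ∈ S, D T ∈ S := by
    intro T hT n
    obtain ⟨n', hn'⟩ : g⁻¹ * j n * g⁻¹⁻¹ ∈ j.range := hnorm.conj_mem _ ⟨n, rfl⟩ g⁻¹
    have e1 : j n = g * j n' * g⁻¹ := by rw [hn']; group
    rw [hDa]
    calc τ (a g) * (T * τ g⁻¹) * τ (j n) = τ (a g) * (T * τ (j n')) * τ g⁻¹ := by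
          rw [e1]; simp only [mul_assoc, ← map_mul]; simp
      _ = τ (a g) * (τ (a (j n')) * T) * τ g⁻¹ := by rw [hT n']
      _ = τ (a (j n)) * (τ (a g) * (T * τ g⁻¹)) := by
          rw [e1]
          simp only [← mul_assoc, ← map_mul]
          simp [mul_assoc]
  obtain ⟨ν, hν⟩ := Module.End.exists_eigenvalue (D.restrict hDS)
  obtain ⟨⟨T, hTS⟩, hT⟩ := hν.exists_hasEigenvector
  have hT0 : T ≠ 0 := fun h => hT.2 (Subtype.ext h)
  have hTD : τ (a g) * (T * τ g⁻¹) = ν • T := congrArg Subtype.val hT.apply_eq_smul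
  have hcancel : ∀ h, τ h⁻¹ * τ h = 1 := fun h => by rw [← map_mul]; simp
  have hcancel' : ∀ h, τ h * τ h⁻¹ = 1 := fun h => by rw [← map_mul]; simp
  have hTg : τ (a g) * T = ν • (T * τ g) := by
    rw [← smul_mul_assoc, ← hTD]
    simp only [mul_assoc, hcancel, mul_one]
  have hν0 : ν ≠ 0 := by
    rintro rfl
    apply hT0
    rw [zero_smul] at hTg
    calc T = τ (a g)⁻¹ * (τ (a g) * T) := by rw [← mul_assoc, hcancel, one_mul]
      _ = 0 := by rw [hTg, mul_zero]
  have hpow : ∀ i : ℕ, τ (a g) ^ i * T = ν ^ i • (T * τ g ^ i) := by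
    intro i
    induction i with
    | zero => simp
    | succ i ih =>
      rw [pow_succ, mul_assoc, hTg, mul_smul_comm, ← mul_assoc, ih, smul_mul_assoc, smul_smul,
        mul_assoc, ← pow_succ, ← pow_succ']
  have hνm : ν ^ m = 1 := by
    obtain ⟨n, hn⟩ := hm
    have h1 := hpow m
    rw [← map_pow, ← map_pow, ← map_pow, ← hn, ← hTS n] at h1
    by_contra hc
    have h2 : (1 - ν ^ m) • (T * τ (j n)) = 0 := by rw [sub_smul, ← h1, one_smul, sub_self]
    rcases smul_eq_zero.1 h2 with h | h
    · exact hc (sub_eq_zero.1 h).symm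
    · apply hT0
      calc T = T * τ (j n) * τ (j n)⁻¹ := by rw [mul_assoc, hcancel', mul_one]
        _ = 0 := by rw [h, zero_mul]
  -- the subgroup of scalars
  let K : Subgroup H :=
    { carrier := {h | ∃ c : ℂ, c ≠ 0 ∧ T * τ h = c • (τ (a h) * T)}
      one_mem' := ⟨1, one_ne_zero, by simp⟩
      mul_mem' := by
        rintro x y ⟨c, hc, hx⟩ ⟨d, hd, hy⟩
        refine ⟨c * d, mul_ne_zero hc hd, ?_⟩
        rw [map_mul, ← mul_assoc, hx, smul_mul_assoc, mul_assoc, hy, map_mul, map_mul,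
          mul_smul_comm, smul_smul, mul_assoc]
      inv_mem' := by
        rintro x ⟨c, hc, hx⟩
        refine ⟨c⁻¹, inv_ne_zero hc, ?_⟩
        have h1 : T = c • (τ (a x) * T * τ x⁻¹) := by
          rw [← smul_mul_assoc, ← hx, mul_assoc, hcancel', mul_one]
        have h2 : τ (a x⁻¹) * T = c • (T * τ x⁻¹) := by
          conv_lhs => rw [h1]
          rw [map_inv, mul_smul_comm, mul_assoc, ← mul_assoc, hcancel, one_mul]
        rw [h2, smul_smul, inv_mul_cancel₀ hc, one_smul] }
  have hTg' : T * τ g = ν⁻¹ • (τ (a g) * T) := by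
    rw [hTg, smul_smul, inv_mul_cancel₀ hν0, one_smul]
  have hK : K = ⊤ := by
    apply hgen
    · rintro _ ⟨n, rfl⟩
      exact ⟨1, one_ne_zero, by rw [one_smul]; exact hTS n⟩
    · exact ⟨ν⁻¹, inv_ne_zero hν0, hTg'⟩
  have hinj : Function.Injective T := by
    let Z : Subrepresentation τ := ⟨LinearMap.ker T, fun h v hv => by
      obtain ⟨c, _, hc⟩ : h ∈ K := by rw [hK]; trivial
      have := LinearMap.congr_fun hc v
      rw [LinearMap.mem_ker] at hv ⊢
      simpa [hv] using this⟩
    rcases hτ.eq_bot_or_eq_top Z with h | h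
    · exact LinearMap.ker_eq_bot.1 (congrArg Subrepresentation.toSubmodule h)
    · exact absurd (LinearMap.ker_eq_top.1 (congrArg Subrepresentation.toSubmodule h)) hT0
  let e := LinearEquiv.ofInjectiveEndo T hinj
  have hstep : ∀ n, τ.character (g * j n) = ν⁻¹ * τ.character (a (g * j n)) := by
    intro n
    have h1 : T * τ (g * j n) = ν⁻¹ • (τ (a (g * j n)) * T) := by
      rw [map_mul, ← mul_assoc, hTg', smul_mul_assoc, mul_assoc, hTS n, map_mul, map_mul, mul_assoc]
    have h2 : e.conj (τ (g * j n)) = ν⁻¹ • τ (a (g * j n)) := by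
      ext w
      obtain ⟨w, rfl⟩ := e.surjective w
      simp only [LinearEquiv.conj_apply, LinearMap.comp_apply, LinearEquiv.coe_coe,
        LinearEquiv.symm_apply_apply]
      exact LinearMap.congr_fun h1 w
    rw [Representation.character, ← LinearMap.trace_conj' _ e, h2, map_smul, smul_eq_mul]
    rfl
  have hit : ∀ i : ℕ, (∃ n, a^[i] g = g * j n) ∧
      τ.character g = ν⁻¹ ^ i * τ.character (a^[i] g) := by
    intro i
    induction i with
    | zero => exact ⟨⟨1, by simp⟩, by simp⟩
    | succ i ih =>
      obtain ⟨⟨n, hn⟩, h⟩ := ih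
      rw [Function.iterate_succ_apply']
      constructor
      · obtain ⟨n', hn'⟩ := htriv (a^[i] g)
        exact ⟨n * n', by rw [hn', hn, map_mul, mul_assoc]⟩
      · rw [h, hn, hstep n, pow_succ, mul_assoc]
  have h1 := (hit 1).2
  have hkk := (hit k).2
  rw [hk] at hkk
  simp only [pow_one, Function.iterate_one] at h1
  by_cases h0 : τ.character g = 0
  · rw [h0] at h1 ⊢
    rcases mul_eq_zero.1 h1.symm with h | h
    · exact absurd h (inv_ne_zero hν0)
    · exact h
  · have hνk : ν ^ k = 1 := by
      have : ν⁻¹ ^ k = 1 := mul_right_cancel₀ h0 (by rw [one_mul]; exact hkk.symm)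
      rwa [inv_pow, inv_eq_one] at this
    have : ν = 1 := by
      rw [← orderOf_eq_one_iff, ← Nat.dvd_one, ← hcop]
      exact Nat.dvd_gcd (orderOf_dvd_of_pow_eq_one hνm) (orderOf_dvd_of_pow_eq_one hνk)
    rw [this] at h1
    simpa using h1.symm

/-- The action of `a` restricted to `N`. -/
def W_actN {G A : Type} [Group G] [Group A] (φ : A →* MulAut G) (N : Subgroup G)
    (hNinv : ∀ a : A, ∀ n ∈ N, φ a n ∈ N) (a : A) : N →* N where
  toFun n := ⟨φ a n, hNinv a n n.2⟩
  map_one' := by ext; simp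
  map_mul' x y := by ext; simp

theorem W_conj_act {G A : Type} [Group G] [Group A]
    (φ : A →* MulAut G) (N : Subgroup G) [N.Normal]
    (hNinv : ∀ a : A, ∀ n ∈ N, φ a n ∈ N)
    (htriv : ∀ a : A, ∀ g : G, (φ a g) * g⁻¹ ∈ N) (a : A) (x : G) (n : N) :
    ∃ n₀ : N, MulAut.conjNormal x (W_actN φ N hNinv a n) =
      W_actN φ N hNinv a (MulAut.conjNormal ((n₀ : G) * x) n) := by
  refine ⟨⟨_, htriv a⁻¹ x⟩, ?_⟩
  ext
  simp [W_actN]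

theorem W_main {G A : Type} [Group G] [Fintype G] [Group A] [Fintype A]
    (φ : A →* MulAut G) (N : Subgroup G) [N.Normal]
    (hNinv : ∀ a : A, ∀ n ∈ N, φ a n ∈ N)
    (hcop : Nat.Coprime N.index (Nat.card A))
    (htriv : ∀ a : A, ∀ g : G, (φ a g) * g⁻¹ ∈ N)
    {V W : Type} [AddCommGroup V] [Module ℂ V] [FiniteDimensional ℂ V]
    [AddCommGroup W] [Module ℂ W] [FiniteDimensional ℂ W]
    (ρ : Representation ℂ G V) (hρ : IsIrreducible ρ)
    (σ : Representation ℂ N W) (hσ : IsIrreducible σ)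
    (hover : ∑ n : N, ρ.character n * σ.character n⁻¹ ≠ 0) (a : A) :
    (∀ g, ρ.character (φ a g) = ρ.character g) ↔
      ∀ n, σ.character (W_actN φ N hNinv a n) = σ.character n := by
  let ρN : Representation ℂ N V := MonoidHom.comp ρ N.subtype
  have hclass : ∀ (n₀ n : N) (y : G), σ.character (MulAut.conjNormal ((n₀ : G) * y) n) =
      σ.character (MulAut.conjNormal y n) := by
    intro n₀ n y
    have : MulAut.conjNormal ((n₀ : G) * y) n = n₀ * MulAut.conjNormal y n * n₀⁻¹ := by
      ext; simp [mul_assoc]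
    rw [this, char_conj]
  have hclass0 : ∀ (n₀ n : N), σ.character (MulAut.conjNormal (n₀ : G) n) = σ.character n := by
    intro n₀ n
    have := hclass n₀ n 1
    simpa using this
  obtain ⟨f, hf, hfi⟩ := W_hom_of_sum σ ρN hover
  constructor
  · intro hinv
    let b := W_actN φ N hNinv a
    have hbij : Function.Bijective b := by
      rw [← Finite.injective_iff_bijective]
      intro x y hxy
      have := congrArg Subtype.val hxy
      exact Subtype.ext ((φ a).injective this)
    let σ' : Representation ℂ N W := MonoidHom.comp σ b
    have hσ' : IsIrreducible σ' := W_irr_comp σ hσ b hbij.2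
    have hsum : ∑ n : N, σ'.character n * ρN.character n⁻¹ ≠ 0 := by
      rw [← W_sum_inv]
      have e : ∀ n : N, σ'.character n⁻¹ * ρN.character n⁻¹⁻¹ =
          (fun n : N => ρ.character (n : G) * σ.character n⁻¹) (b n) := by
        intro n
        have h1 : ρN.character n = ρ.character (b n : G) := (hinv n).symm
        rw [inv_inv, h1, mul_comm]
        change _ = ρ.character (b n : G) * σ.character (b n)⁻¹
        rw [← map_inv]; rfl
      simp only [e]
      rw [Function.Bijective.sum_comp hbij (fun n : N => ρ.character n * σ.character n⁻¹)]
      exact hover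
    obtain ⟨f', hf', hfi'⟩ := W_hom_of_sum ρN σ' hsum
    obtain ⟨x, hx⟩ := W_clifford N ρ hρ σ hσ σ' hσ' f hf hfi f' hf' hfi'
    have hx' : ∀ n, σ.character (b n) = σ.character (MulAut.conjNormal x n) := hx
    have hit : ∀ (i : ℕ) (n : N), σ.character (W_actN φ N hNinv (a ^ i) n) =
        σ.character (MulAut.conjNormal (x ^ i) n) := by
      intro i
      induction i with
      | zero => intro n; simp [W_actN]
      | succ i ih =>
        intro n
        have e : W_actN φ N hNinv (a ^ (i + 1)) n = b (W_actN φ N hNinv (a ^ i) n) := by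
          ext; simp [W_actN, b, pow_succ']
        rw [e, hx']
        obtain ⟨n₀, hn₀⟩ := W_conj_act φ N hNinv htriv (a ^ i) x n
        rw [hn₀, ih, ← MulAut.mul_apply, ← map_mul]
        have e2 : x ^ i * ((n₀ : G) * x) =
            ((⟨x ^ i * n₀ * (x ^ i)⁻¹, Subgroup.Normal.conj_mem inferInstance _ n₀.2 _⟩ : N) : G) *
              x ^ (i + 1) := by
          simp [pow_succ, mul_assoc]
        rw [e2, hclass]
    -- stabilizer
    let I : Subgroup G :=
      { carrier := {y | ∀ n, σ.character (MulAut.conjNormal y n) = σ.character n}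
        one_mem' := fun n => by simp
        mul_mem' := fun {y z} hy hz n => by
          rw [map_mul, MulAut.mul_apply, hy, hz]
        inv_mem' := fun {y} hy n => by
          rw [← hy, ← MulAut.mul_apply, ← map_mul]; simp }
    have h1 : x ^ N.index ∈ I := fun n =>
      hclass0 ⟨x ^ N.index, N.pow_index_mem x⟩ n
    have h2 : x ^ Nat.card A ∈ I := fun n => by
      rw [← hit, pow_card_eq_one']
      congr 1
      ext; simp [W_actN]
    have h3 : x ∈ I := by
      have hg := Nat.gcd_eq_gcd_ab N.index (Nat.card A)
      rw [hcop] at hg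
      have : x = (x ^ N.index) ^ (N.index.gcdA (Nat.card A)) *
          (x ^ Nat.card A) ^ (N.index.gcdB (Nat.card A)) := by
        rw [← zpow_natCast, ← zpow_natCast, ← zpow_mul, ← zpow_mul, ← zpow_add, ← hg]
        simp
      rw [this]
      exact I.mul_mem (I.zpow_mem h1 _) (I.zpow_mem h2 _)
    intro n
    exact (hx' n).trans (h3 n)
  · intro hinv g
    let H : Subgroup G := N ⊔ Subgroup.zpowers g
    have hNH : N ≤ H := le_sup_left
    have hgH : g ∈ H := (le_sup_right : _ ≤ H) (Subgroup.mem_zpowers g)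
    let j : N →* H := Subgroup.inclusion hNH
    have haH : ∀ h ∈ H, φ a h ∈ H := fun h hh => by
      have := H.mul_mem (hNH (htriv a h)) hh
      simpa using this
    let α : H →* H := W_actN φ H (fun b h hh => by
      have := H.mul_mem (hNH (htriv b h)) hh
      simpa using this) a
    let ρH : Representation ℂ H V := MonoidHom.comp ρ H.subtype
    let g' : H := ⟨g, hgH⟩
    change ρH.character (α g') = ρH.character g'
    refine W_irr_decomp (fun f => f (α g') = f g') rfl
      (fun f₁ f₂ h₁ h₂ => by simp only [Pi.add_apply, h₁, h₂]) _ V ρH rfl ?_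
    intro U _ _ _ τ hτ ι hι hιi
    have hαi : ∀ (i : ℕ) (h : H), ((α^[i] h : H) : G) = φ (a ^ i) h := by
      intro i h
      induction i with
      | zero => simp
      | succ i ih =>
        rw [Function.iterate_succ_apply']
        change φ a ((α^[i] h : H) : G) = _
        rw [ih, pow_succ', map_mul, MulAut.mul_apply]
    refine W_cyc j ?_ α τ hτ g' (Nat.card A) N.index ?_ ?_ ?_ ?_ hcop ?_
    · refine ⟨?_⟩
      rintro _ ⟨n, rfl⟩ h
      exact ⟨MulAut.conjNormal (h : G) n, by ext; simp [j]⟩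
    · intro h
      ext
      rw [hαi, pow_card_eq_one']; simp
    · intro h
      refine ⟨⟨(h : G)⁻¹ * φ a h, ?_⟩, ?_⟩
      · have := Subgroup.Normal.conj_mem (inferInstance : N.Normal) _ (htriv a h) (h : G)⁻¹
        simpa [mul_assoc] using this
      · ext; simp [j, α, W_actN]
    · intro K h1 h2
      have : H ≤ K.map H.subtype := by
        refine sup_le ?_ ?_
        · intro n hn
          exact ⟨j ⟨n, hn⟩, h1 ⟨_, rfl⟩, rfl⟩
        · rw [Subgroup.zpowers_le]
          exact ⟨g', h2, rfl⟩
      rw [eq_top_iff]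
      intro h _
      obtain ⟨h', hh', e⟩ := this h.2
      rwa [← Subtype.ext e]
    · exact ⟨⟨g ^ N.index, N.pow_index_mem g⟩, by ext; simp [j, g']⟩
    · let τN : Representation ℂ N U := MonoidHom.comp τ j
      intro n
      change τN.character (W_actN φ N hNinv a n) = τN.character n
      refine W_irr_decomp (fun f => f (W_actN φ N hNinv a n) = f n) rfl
        (fun f₁ f₂ h₁ h₂ => by simp only [Pi.add_apply, h₁, h₂]) _ U τN rfl ?_
      intro W' _ _ _ σ' hσ' κ hκ hκi
      have hne : Nontrivial W' := by
        by_contra hc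
        rw [not_nontrivial_iff_subsingleton] at hc
        have := hσ'.toNontrivial
        apply bot_ne_top (α := Subrepresentation σ')
        apply Subrepresentation.toSubmodule_injective
        exact Subsingleton.elim _ _
      have hs := W_sum_of_hom σ' ρN (ι ∘ₗ κ) (by
          intro h
          obtain ⟨w, hw⟩ := exists_ne (0 : W')
          apply hw
          apply hκ
          apply hι
          simpa using LinearMap.congr_fun h w) (by
          intro n w
          simp only [LinearMap.comp_apply, hκi]
          exact hιi _ _)
      rw [← W_sum_inv] at hs
      obtain ⟨f', hf', hfi'⟩ := W_hom_of_sum ρN σ' (by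
        simpa only [inv_inv, mul_comm] using hs)
      obtain ⟨x, hx⟩ := W_clifford N ρ hρ σ hσ σ' hσ' f hf hfi f' hf' hfi'
      rw [hx, hx]
      obtain ⟨n₀, hn₀⟩ := W_conj_act φ N hNinv htriv a x n
      rw [hn₀, hinv, hclass]

end WolfAux

/-- Wolf's Lemma 1.4: `A` acts on `G`, `N ⊴ G` is `A`-invariant, `gcd(|G:N|,|A|) = 1`,
`A` acts trivially on `G/N`; for `χ ∈ Irr G`, `θ ∈ Irr N` with `[χ|_N, θ] ≠ 0`,
`χ` is `A`-invariant iff `θ` is `A`-invariant. -/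
theorem stmt_5 {G A : Type} [Group G] [Fintype G] [Group A] [Fintype A]
    (φ : A →* MulAut G) (N : Subgroup G) [N.Normal]
    (hNinv : ∀ a : A, ∀ n ∈ N, φ a n ∈ N)
    (hcop : Nat.Coprime N.index (Nat.card A))
    (htriv : ∀ a : A, ∀ g : G, (φ a g) * g⁻¹ ∈ N)
    (χ : G → ℂ) (hχ : IsIrrChar χ) (θ : N → ℂ) (hθ : IsIrrChar θ)
    (hover : charInner N (charRes N χ) θ ≠ 0) :
    (∀ a : A, ∀ g : G, χ (φ a g) = χ g) ↔
      (∀ a : A, ∀ n m : N, (m : G) = φ a (n : G) → θ m = θ n) := by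
  obtain ⟨V, hV, rfl⟩ := hχ
  obtain ⟨W, hW, rfl⟩ := hθ
  have hs : ∑ n : N, Representation.character (V := V) V.ρ n *
      Representation.character (V := W) W.ρ n⁻¹ ≠ 0 := by
    intro h
    apply hover
    unfold charInner
    rw [mul_eq_zero]
    right
    rw [← h]
    refine Finset.sum_congr (by ext; simp) fun n _ => ?_
    rw [W_char_inv]
    rfl
  have key := W_main φ N hNinv hcop htriv (V := V) (W := W) V.ρ (W_simple_irr V hV) W.ρ
    (W_simple_irr W hW) hs
  constructor
  · intro h a n m hm
    have e : m = W_actN φ N hNinv a n := Subtype.ext hm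
    rw [e]
    exact (key a).1 (h a) n
  · intro h a
    exact (key a).2 fun n => h a n _ rfl
end
end
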